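/- arXiv:2004.05781 — 3 statements merged into one kernel-verified Lean document; each statement's English description precedes it below -/
import Mathlib

section
/- Let X_A ⊂ S^ℤ be a topologically mixing subshift of finite type and μ = μ_{(P_n : n ∈ ℤ)} a Markov measure on X_A satisfying the Doeblin condition. If the left shift T is nonsingular and conservative with respect to μ, and both limits lim_{n→∞} P_n and lim_{n→∞} P_{−n} exist (entrywise), then these two limits are equal; that is, lim_{|n|→∞} P_n exists. -/
/-!
If the limits differ in the row of a state `s`, some function separates the two limiting rows;
centring it gives `g` with `P n s ⬝ᵥ g ≤ -ε` for large `n` and `P (-n) s ⬝ᵥ g ≥ ε` for large `n`.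
Consider the sum of `g (x (j + 1))` over the times `j` of a window at which `x j = s`.

By Chernoff's bound, the probability that such a sum has the wrong sign is at most the mass of a
product of exponentially tilted kernels. For a small tilt each of them is sub-Markov and loses a
definite proportion of the mass at `s`. As `s` can be reached from every state, a Lyapunov function
`h = 2 - u`, where `u` decays geometrically in the distance to `s`, satisfies `G h ≤ r h` with one
`r < 1` for all these kernels `G`, so the mass decays exponentially in the length of the window.

By Borel–Cantelli, for almost every `x` the sum over `[K, K + m)` is negative and the sum over
`[-K - m, -K)` is positive for all large `m`. By conservativity some `T ^ n x` with `n` large is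
such a point with the same threshold on `m` as `x`. For `n = m + 2 * K` its left window is the right
window of `x`, so one sum has both signs.
-/

open MeasureTheory Filter Topology

namespace MarkovSFT

/-- The space of two-sided sequences over `S`. -/
abbrev Seq (S : Type*) := ℤ → S

/-- The shift by `n`: `(T^n x)_k = x_{k+n}`. -/
def shiftZ {S : Type*} (n : ℤ) (x : Seq S) : Seq S := fun k => x (k + n)

/-- The left shift `T`. -/
def shiftMap {S : Type*} : Seq S → Seq S := shiftZ 1

/-- The subshift of finite type determined by the adjacency matrix `A`. -/
def SFT {S : Type*} (A : S → S → Bool) : Set (Seq S) :=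
  {x | ∀ n : ℤ, A (x n) (x (n + 1)) = true}

/-- `A` is primitive: all entries of `A^M` are positive for some `M ≥ 1`
(expressed via the existence of admissible paths of length `M`). -/
def IsPrimitive {S : Type*} (A : S → S → Bool) : Prop :=
  ∃ M : ℕ, 1 ≤ M ∧ ∀ s t : S, ∃ u : ℕ → S,
    u 0 = s ∧ u M = t ∧ ∀ i < M, A (u i) (u (i + 1)) = true

/-- A stochastic matrix over the finite state space `S`. -/
def IsStochastic {S : Type*} [Fintype S] (P : S → S → ℝ) : Prop :=
  (∀ s t, 0 ≤ P s t) ∧ ∀ s, ∑ t, P s t = 1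

/-- The Doeblin condition for the family of transition matrices `P` relative to `A`. -/
def Doeblin {S : Type*} (A : S → S → Bool) (P : ℤ → S → S → ℝ) : Prop :=
  ∃ δ : ℝ, 0 < δ ∧ ∀ (n : ℤ) (s t : S), δ ≤ P n s t ↔ A s t = true

/-- `μ` is the Markov measure on the SFT `X_A` determined by the transition
matrices `(P n)` and coordinate distributions `(π n)`. -/
structure IsMarkovMeasure {S : Type*} [Fintype S] [MeasurableSpace S]
    (μ : Measure (Seq S)) (A : S → S → Bool)
    (P : ℤ → S → S → ℝ) (π : ℤ → S → ℝ) : Prop where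
  isProb : IsProbabilityMeasure μ
  stochastic : ∀ n, IsStochastic (P n)
  compat : ∀ (n : ℤ) (s t : S), A s t = false → P n s t = 0
  dist_nonneg : ∀ (n : ℤ) (s : S), 0 ≤ π n s
  dist_sum : ∀ n : ℤ, ∑ s, π n s = 1
  consistent : ∀ (n : ℤ) (t : S), ∑ s, π n s * P n s t = π (n + 1) t
  supp : μ (SFT A) = 1
  cylinder : ∀ (k : ℤ) (m : ℕ) (w : Fin (m + 1) → S),
    μ {x | ∀ i : Fin (m + 1), x (k + 1 + ((i : ℕ) : ℤ)) = w i}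
      = ENNReal.ofReal (π (k + 1) (w 0) *
          ∏ i : Fin m, P (k + 1 + ((i : ℕ) : ℤ)) (w i.castSucc) (w i.succ))

/-- The left shift is nonsingular with respect to `μ`:
`μ` and `μ ∘ T⁻¹` are mutually absolutely continuous. -/
def ShiftNonsingular {S : Type*} [Fintype S] [MeasurableSpace S]
    (μ : Measure (Seq S)) : Prop :=
  Measure.map (shiftMap (S := S)) μ ≪ μ ∧ μ ≪ Measure.map (shiftMap (S := S)) μ

/-- The left shift is conservative with respect to `μ`. -/
def ShiftConservative {S : Type*} [Fintype S] [MeasurableSpace S]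
    (μ : Measure (Seq S)) : Prop :=
  ∀ E : Set (Seq S), MeasurableSet E → 0 < μ E →
    ∃ n : ℕ, 1 ≤ n ∧ 0 < μ (E ∩ (shiftMap (S := S))^[n] ⁻¹' E)

/-- An element of the pseudo full-group `[[T]]` of the shift, together with
(a version of) the logarithm of its Radon–Nikodym derivative `log dμ∘V/dμ`. -/
structure PFG {S : Type*} [Fintype S] [MeasurableSpace S] (μ : Measure (Seq S)) where
  dom : Set (Seq S)
  toFun : Seq S → Seq S
  logDeriv : Seq S → ℝ
  meas_dom : MeasurableSet dom
  meas_toFun : Measurable toFun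
  meas_logDeriv : Measurable logDeriv
  injOn : Set.InjOn toFun dom
  orbit : ∀ᵐ x ∂μ.restrict dom, ∃ n : ℤ, toFun x = shiftZ n x
  deriv_spec : ∀ E : Set (Seq S), E ⊆ dom → MeasurableSet E →
    μ (toFun '' E) = ∫⁻ x in E, ENNReal.ofReal (Real.exp (logDeriv x)) ∂μ

/-- `r` is an essential value of (the Radon–Nikodym cocycle of) the shift on `(X, μ)`. -/
def IsEssentialValue {S : Type*} [Fintype S] [MeasurableSpace S]
    (μ : Measure (Seq S)) (r : ℝ) : Prop :=
  ∀ E : Set (Seq S), MeasurableSet E → 0 < μ E → ∀ ε : ℝ, 0 < ε →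
    ∃ g : PFG μ,
      0 < μ (E ∩ g.dom ∩ g.toFun ⁻¹' E ∩ {x | |g.logDeriv x - r| < ε})

end MarkovSFT
namespace MarkovSFT

open ProbabilityTheory
open scoped Matrix

/-! ### Recurrence -/

/-- The points whose last visit to `E` occurs at time `j` form a wandering set, hence a null one. -/
lemma ae_mem_imp_frequently_iterate_mem {Ω : Type*} [MeasurableSpace Ω] {μ : Measure Ω}
    {T : Ω → Ω} (hT : Measurable T)
    (hcons : ∀ E, MeasurableSet E → 0 < μ E → ∃ n, 1 ≤ n ∧ 0 < μ (E ∩ T^[n] ⁻¹' E))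
    {E : Set Ω} (hE : MeasurableSet E) :
    ∀ᵐ x ∂μ, x ∈ E → ∃ᶠ n in atTop, T^[n] x ∈ E := by
  classical
  let lastVisit (j : ℕ) : Set Ω := T^[j] ⁻¹' E \ ⋃ i > j, T^[i] ⁻¹' E
  have hmeas (j : ℕ) : MeasurableSet (lastVisit j) :=
    (hT.iterate j hE).diff (.iUnion fun i => .iUnion fun _ => hT.iterate i hE)
  have hnull (j : ℕ) : μ (lastVisit j) = 0 := by
    by_contra hpos
    obtain ⟨n, hn, hret⟩ := hcons _ (hmeas j) (pos_iff_ne_zero.2 hpos)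
    obtain ⟨x, ⟨-, hlast⟩, hxn, -⟩ := nonempty_of_measure_ne_zero hret.ne'
    refine hlast (Set.mem_biUnion (show j + n > j by lia) ?_)
    rwa [Set.mem_preimage, Function.iterate_add_apply]
  filter_upwards [ae_all_iff.2 fun j => measure_eq_zero_iff_ae_notMem.1 (hnull j)] with x hx hxE
  by_contra hfin
  obtain ⟨N, hN⟩ := eventually_atTop.1 (not_frequently.1 hfin)
  refine hx (Nat.findGreatest (fun n => T^[n] x ∈ E) N)
    ⟨Nat.findGreatest_spec (P := fun n => T^[n] x ∈ E) (Nat.zero_le N) hxE, fun hlater => ?_⟩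
  obtain ⟨i, hi, hiE⟩ := Set.mem_iUnion₂.1 hlater
  rcases le_total i N with hiN | hiN
  · exact Nat.findGreatest_is_greatest hi hiN hiE
  · exact hN i hiN hiE

section WindowSum

variable {S : Type*}

/-- The sum of `φ (x j) (x (j + 1))` over the window `k ≤ j < k + m`: the observable whose sign
tells the far past of `x` from its far future. -/
def windowSum (φ : S → S → ℝ) (k : ℤ) (m : ℕ) (x : Seq S) : ℝ :=
  ∑ i ∈ Finset.range m, φ (x (k + i)) (x (k + i + 1))

/-- The word `x k, …, x (k + m)`, which carries the `m` transitions of the window `[k, k + m)`. -/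
def window (k : ℤ) (m : ℕ) (x : Seq S) : Fin (m + 1) → S := fun i => x (k + (i : ℕ))

/-- The sum of `φ` over the transitions of the word `w`; it expresses `windowSum` as a function on
the finite type of words. -/
def wordSum (φ : S → S → ℝ) {m : ℕ} (w : Fin (m + 1) → S) : ℝ :=
  ∑ i : Fin m, φ (w i.castSucc) (w i.succ)

lemma windowSum_eq_wordSum_comp_window (φ : S → S → ℝ) (k : ℤ) (m : ℕ) :
    windowSum φ k m = wordSum φ ∘ window k m := by
  ext x
  simp [windowSum, wordSum, window, Finset.sum_range, add_assoc]

lemma windowSum_shiftZ (φ : S → S → ℝ) (k n : ℤ) (m : ℕ) (x : Seq S) :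
    windowSum φ k m (shiftZ n x) = windowSum φ (k + n) m x := by
  simp only [windowSum, shiftZ, add_right_comm _ _ n]

lemma windowSum_neg (φ : S → S → ℝ) (k : ℤ) (m : ℕ) (x : Seq S) :
    windowSum (-φ) k m x = -windowSum φ k m x := by
  simp [windowSum]

lemma iterate_shiftMap (n : ℕ) : (shiftMap (S := S))^[n] = shiftZ n := by
  induction n with
  | zero => ext x k; simp [shiftZ]
  | succ n ih =>
    ext x k
    rw [Function.iterate_succ_apply', ih]
    simp [shiftMap, shiftZ, add_right_comm, add_assoc]

variable [MeasurableSpace S]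

lemma measurable_shiftMap : Measurable (shiftMap (S := S)) :=
  measurable_pi_lambda _ fun k => measurable_pi_apply (k + 1)

lemma measurable_window (k : ℤ) (m : ℕ) : Measurable (window (S := S) k m) :=
  measurable_pi_lambda _ fun i => measurable_pi_apply (k + (i : ℕ))

variable [MeasurableSingletonClass S]

lemma measurable_windowSum [Finite S] (φ : S → S → ℝ) (k : ℤ) (m : ℕ) :
    Measurable (windowSum φ k m) := by
  rw [windowSum_eq_wordSum_comp_window]
  exact (Measurable.of_discrete (f := wordSum φ)).comp (measurable_window k m)

/-- The window `[-K - m, -K)` of `T ^ (m + 2 * K) x` is the window `[K, K + m)` of `x`. -/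
lemma not_ae_windowSum_neg_and_pos [Fintype S] {μ : Measure (Seq S)} [NeZero μ]
    (hcons : ShiftConservative μ) (φ : S → S → ℝ) (K : ℕ)
    (hneg : ∀ᵐ x ∂μ, ∀ᶠ m in atTop, windowSum φ K m x < 0)
    (hpos : ∀ᵐ x ∂μ, ∀ᶠ m : ℕ in atTop, 0 < windowSum φ (-K - m) m x) : False := by
  let E (N : ℕ) : Set (Seq S) := ⋂ m : ℕ, ⋂ _ : N ≤ m, {x | 0 < windowSum φ (-K - m) m x}
  have hE (N : ℕ) : MeasurableSet (E N) :=
    .iInter fun m => .iInter fun _ => measurableSet_lt measurable_const (measurable_windowSum _ _ _)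
  have hrec := ae_all_iff.2 fun N =>
    ae_mem_imp_frequently_iterate_mem measurable_shiftMap hcons (hE N)
  obtain ⟨x, hxneg, hxpos, hxrec⟩ := (hneg.and (hpos.and hrec)).exists
  obtain ⟨N₁, hN₁⟩ := eventually_atTop.1 hxneg
  obtain ⟨N₂, hN₂⟩ := eventually_atTop.1 hxpos
  obtain ⟨n, hn, hret⟩ := frequently_atTop.1 (hxrec N₂ (Set.mem_iInter₂.2 hN₂)) (N₁ + N₂ + 2 * K)
  obtain ⟨m, rfl⟩ : ∃ m, n = m + 2 * K := ⟨n - 2 * K, by lia⟩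
  have hleft : 0 < windowSum φ (-K - m) m _ := Set.mem_iInter₂.1 hret m (by lia)
  rw [iterate_shiftMap, windowSum_shiftZ,
    show -(K : ℤ) - m + ((m + 2 * K : ℕ) : ℤ) = K by push_cast; ring] at hleft
  exact lt_asymm (hN₁ m (by lia)) hleft

end WindowSum

/-! ### Products of leaky kernels -/

/-- The matrix `A` is irreducible: every state is reachable from every other one along admissible
transitions. -/
def IsIrreducible {S : Type*} (A : S → S → Bool) : Prop :=
  ∀ s t, Relation.ReflTransGen (fun a b => A a b = true) s t

lemma IsPrimitive.isIrreducible {S : Type*} {A : S → S → Bool} (hA : IsPrimitive A) :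
    IsIrreducible A := by
  obtain ⟨M, -, hM⟩ := hA
  intro s t
  obtain ⟨u, rfl, rfl, hu⟩ := hM s t
  exact (reflTransGen_of_succ_of_le (fun i j => A (u i) (u j) = true)
    (fun i hi => hu i hi.2) (Nat.zero_le M)).lift u fun _ _ h => h

lemma exists_rank_of_reflTransGen {α : Type*} {r : α → α → Prop} {s : α}
    (h : ∀ a, Relation.ReflTransGen r a s) :
    ∃ d : α → ℕ, ∀ a, a ≠ s → ∃ b, r a b ∧ d b < d a := by
  classical
  let pre (X : Set α) : Set α := {a | ∃ b ∈ X, r a b}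
  have hsteps (a : α) : ∃ n, a ∈ pre^[n] {s} := by
    induction h a using Relation.ReflTransGen.head_induction_on with
    | refl => exact ⟨0, rfl⟩
    | head hab _ ih =>
      obtain ⟨n, hn⟩ := ih
      exact ⟨n + 1, by rw [Function.iterate_succ_apply']; exact ⟨_, hn, hab⟩⟩
  refine ⟨fun a => Nat.find (hsteps a), fun a ha => ?_⟩
  dsimp only
  have hmem := Nat.find_spec (hsteps a)
  cases hd : Nat.find (hsteps a) with
  | zero => rw [hd] at hmem; exact absurd hmem ha
  | succ n =>
    rw [hd, Function.iterate_succ_apply'] at hmem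
    obtain ⟨b, hb, hab⟩ := hmem
    exact ⟨b, hab, Nat.lt_succ_of_le (Nat.find_min' (hsteps b) hb)⟩

lemma exists_pos_two_mul_le_mul_of_reflTransGen {α : Type*} {r : α → α → Prop} {s : α}
    (h : ∀ a, Relation.ReflTransGen r a s) {η κ : ℝ} (hη : 0 < η) (hκ : 0 < κ) :
    ∃ u : α → ℝ, (∀ a, 0 < u a) ∧ (∀ a, u a ≤ 1) ∧ u s ≤ η ∧
      ∀ a, a ≠ s → ∃ b, r a b ∧ 2 * u a ≤ κ * u b := by
  obtain ⟨d, hd⟩ := exists_rank_of_reflTransGen h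
  set c := min η 1
  set β := min κ 1 / 2 with hβ
  have hc : 0 < c := lt_min hη one_pos
  have hβ0 : 0 < β := half_pos (lt_min hκ one_pos)
  have hβ1 : β ≤ 1 := by linarith [min_le_right κ 1]
  have hle (a : α) : c * β ^ d a ≤ c := mul_le_of_le_one_right hc.le (pow_le_one₀ hβ0.le hβ1)
  refine ⟨fun a => c * β ^ d a, fun a => by positivity, fun a => (hle a).trans (min_le_right _ _),
    (hle s).trans (min_le_left _ _), fun a ha => ?_⟩
  obtain ⟨b, hab, hlt⟩ := hd a ha
  refine ⟨b, hab, ?_⟩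
  calc 2 * (c * β ^ d a) ≤ 2 * (c * β ^ (d b + 1)) := by
        gcongr 2 * (c * ?_)
        exact pow_le_pow_of_le_one hβ0.le hβ1 hlt
    _ = min κ 1 * (c * β ^ d b) := by rw [hβ]; ring
    _ ≤ κ * (c * β ^ d b) := by gcongr; exact min_le_left _ _

lemma mulVec_le_mulVec_of_nonneg {ι κ R : Type*} [Fintype κ] [Semiring R] [PartialOrder R]
    [IsOrderedRing R] {G : Matrix ι κ R} (hG : ∀ i j, 0 ≤ G i j) {v w : κ → R} (hvw : v ≤ w) :
    G *ᵥ v ≤ G *ᵥ w :=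
  fun i => dotProduct_le_dotProduct_of_nonneg_left hvw (hG i)

lemma prod_mulVec_le_pow_smul {ι R : Type*} [Fintype ι] [DecidableEq ι] [CommSemiring R]
    [PartialOrder R] [IsOrderedRing R] {v h : ι → R} (hvh : v ≤ h) {r : R} (hr : 0 ≤ r)
    (L : List (Matrix ι ι R)) (hnonneg : ∀ G ∈ L, ∀ i j, 0 ≤ G i j)
    (hL : ∀ G ∈ L, G *ᵥ h ≤ r • h) :
    L.prod *ᵥ v ≤ r ^ L.length • h := by
  induction L with
  | nil => simpa using hvh
  | cons G L ih =>
    simp only [List.forall_mem_cons] at hnonneg hL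
    calc (G :: L).prod *ᵥ v = G *ᵥ (L.prod *ᵥ v) := by rw [List.prod_cons, Matrix.mulVec_mulVec]
      _ ≤ G *ᵥ (r ^ L.length • h) := mulVec_le_mulVec_of_nonneg hnonneg.1 (ih hnonneg.2 hL.2)
      _ = r ^ L.length • (G *ᵥ h) := Matrix.mulVec_smul _ _ _
      _ ≤ r ^ L.length • (r • h) := fun i => mul_le_mul_of_nonneg_left (hL.1 i) (pow_nonneg hr _)
      _ = r ^ (G :: L).length • h := by rw [smul_smul, List.length_cons, pow_succ]

/-- A sub-Markov kernel with weight at least `κ` on the edges of `A` that loses mass at least `η`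
at the state `s`. Slightly tilted transition matrices have this shape. -/
structure IsLeaky {S : Type*} [Fintype S] (A : S → S → Bool) (s : S) (η κ : ℝ)
    (G : Matrix S S ℝ) : Prop where
  nonneg : ∀ a b, 0 ≤ G a b
  sum_le_one : ∀ a, ∑ b, G a b ≤ 1
  sum_le : ∑ b, G s b ≤ 1 - η
  le_of_edge : ∀ a b, A a b = true → κ ≤ G a b

section Leaky

variable {S : Type*} [Fintype S] {A : S → S → Bool} {s : S} {η κ : ℝ}

lemma IsLeaky.mulVec_two_sub_le {G : Matrix S S ℝ} (hG : IsLeaky A s η κ G) {u : S → ℝ}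
    (hu0 : ∀ a, 0 ≤ u a) (hus : u s ≤ η)
    (hu : ∀ a, a ≠ s → ∃ b, A a b = true ∧ 2 * u a ≤ κ * u b) (a : S) :
    (G *ᵥ fun b => 2 - u b) a ≤ 2 - 2 * u a := by
  have hsplit : (G *ᵥ fun b => 2 - u b) a = 2 * ∑ b, G a b - ∑ b, G a b * u b := by
    simp only [Matrix.mulVec, dotProduct, mul_sub, Finset.sum_sub_distrib, ← Finset.sum_mul]
    ring
  have hterm (b : S) : 0 ≤ G a b * u b := mul_nonneg (hG.nonneg a b) (hu0 b)
  rcases eq_or_ne a s with rfl | ha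
  · linarith [hG.sum_le, Finset.sum_nonneg fun b (_ : b ∈ Finset.univ) => hterm b]
  · obtain ⟨b, hab, hub⟩ := hu a ha
    have hloss : κ * u b ≤ ∑ b, G a b * u b :=
      (mul_le_mul_of_nonneg_right (hG.le_of_edge a b hab) (hu0 b)).trans
        (Finset.single_le_sum (fun b _ => hterm b) (Finset.mem_univ b))
    linarith [hG.sum_le_one a]

/-- With `u` decaying geometrically in the distance to `s`, the function `2 - u` is contracted by
every leaky kernel. -/
lemma IsIrreducible.exists_forall_isLeaky_mulVec_le (hA : IsIrreducible A) (s : S) (hη : 0 < η)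
    (hκ : 0 < κ) :
    ∃ (h : S → ℝ) (r : ℝ), 1 ≤ h ∧ 0 ≤ r ∧ r < 1 ∧
      ∀ G : Matrix S S ℝ, IsLeaky A s η κ G → G *ᵥ h ≤ r • h := by
  obtain ⟨u, hu0, hu1, hus, hu⟩ :=
    exists_pos_two_mul_le_mul_of_reflTransGen (fun a => hA a s) hη hκ
  have : Nonempty S := ⟨s⟩
  obtain ⟨a₀, ha₀⟩ := Finite.exists_min u
  refine ⟨fun a => 2 - u a, 1 - u a₀ / 2, fun a => ?_, ?_, ?_, fun G hG a => ?_⟩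
  · simp only [Pi.one_apply]
    linarith [hu1 a]
  · linarith [hu1 a₀]
  · linarith [hu0 a₀]
  · calc (G *ᵥ fun b => 2 - u b) a ≤ 2 - 2 * u a :=
          hG.mulVec_two_sub_le (fun b => (hu0 b).le) hus hu a
      _ ≤ (1 - u a₀ / 2) * (2 - u a) := by
          linarith [ha₀ a, mul_pos (hu0 a₀) (hu0 a)]

lemma IsIrreducible.exists_dotProduct_prod_mulVec_one_le [DecidableEq S] (hA : IsIrreducible A)
    (s : S) (hη : 0 < η) (hκ : 0 < κ) :
    ∃ C r : ℝ, 0 ≤ r ∧ r < 1 ∧ ∀ L : List (Matrix S S ℝ), (∀ G ∈ L, IsLeaky A s η κ G) →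
      ∀ p ∈ stdSimplex ℝ S, p ⬝ᵥ (L.prod *ᵥ 1) ≤ C * r ^ L.length := by
  obtain ⟨h, r, h1, hr0, hr1, hcontr⟩ := hA.exists_forall_isLeaky_mulVec_le s hη hκ
  refine ⟨‖h‖, r, hr0, hr1, fun L hL p hp => ?_⟩
  have hprod : L.prod *ᵥ 1 ≤ fun _ => ‖h‖ * r ^ L.length := fun a =>
    calc (L.prod *ᵥ 1) a ≤ r ^ L.length * h a :=
          prod_mulVec_le_pow_smul h1 hr0 L (fun G hG => (hL G hG).nonneg)
            (fun G hG => hcontr G (hL G hG)) a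
      _ ≤ ‖h‖ * r ^ L.length := by
          rw [mul_comm]
          exact mul_le_mul_of_nonneg_right ((le_abs_self _).trans (norm_le_pi_norm h a))
            (pow_nonneg hr0 _)
  calc p ⬝ᵥ (L.prod *ᵥ 1) ≤ p ⬝ᵥ fun _ => ‖h‖ * r ^ L.length :=
        dotProduct_le_dotProduct_of_nonneg_left hprod hp.1
    _ = ‖h‖ * r ^ L.length := by rw [dotProduct, ← Finset.sum_mul, hp.2, one_mul]

end Leaky

/-! ### Exponential moments of window sums -/

lemma sum_mul_prod_eq_dotProduct_prod_mulVec {ι R : Type*} [Fintype ι] [DecidableEq ι]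
    [CommSemiring R] {m : ℕ} (v : ι → R) (G : Fin m → Matrix ι ι R) :
    ∑ w : Fin (m + 1) → ι, v (w 0) * ∏ i, G i (w i.castSucc) (w i.succ) =
      v ⬝ᵥ ((List.ofFn G).prod *ᵥ 1) := by
  induction m generalizing v with
  | zero =>
    simpa [dotProduct] using (Equiv.funUnique (Fin 1) ι).sum_comp v
  | succ m ih =>
    rw [List.ofFn_succ, List.prod_cons, ← Matrix.mulVec_mulVec, Matrix.dotProduct_mulVec, ← ih,
      ← (Fin.consEquiv fun _ : Fin (m + 2) => ι).sum_comp, Fintype.sum_prod_type, Finset.sum_comm]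
    refine Finset.sum_congr rfl fun w _ => ?_
    simp [Fin.prod_univ_succ, Matrix.vecMul, dotProduct, Finset.sum_mul, mul_assoc]

/-- The kernel `R` reweighted by `exp (l * φ)`, not renormalised: products of such kernels compute
the exponential moments of window sums of `φ`. -/
noncomputable def tilt {S : Type*} (l : ℝ) (φ R : S → S → ℝ) : Matrix S S ℝ :=
  .of fun a b => R a b * Real.exp (l * φ a b)

section Moments

variable {S : Type*} [Fintype S] [MeasurableSpace S] [MeasurableSingletonClass S]
  {A : S → S → Bool} {P : ℤ → S → S → ℝ} {π : ℤ → S → ℝ} {μ : Measure (Seq S)}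

lemma IsMarkovMeasure.map_window_real_singleton (hμ : IsMarkovMeasure μ A P π) (k : ℤ) (m : ℕ)
    (w : Fin (m + 1) → S) :
    (μ.map (window k m)).real {w} =
      π k (w 0) * ∏ i : Fin m, P (k + (i : ℕ)) (w i.castSucc) (w i.succ) := by
  have hcyl := hμ.cylinder (k - 1) m w
  rw [sub_add_cancel] at hcyl
  have hpre : window k m ⁻¹' {w} = {x : Seq S | ∀ i : Fin (m + 1), x (k + (i : ℕ)) = w i} := by
    ext x
    simp [window, funext_iff]
  rw [map_measureReal_apply (measurable_window k m) (measurableSet_singleton w), hpre,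
    measureReal_def, hcyl, ENNReal.toReal_ofReal]
  exact mul_nonneg (hμ.dist_nonneg _ _) (Finset.prod_nonneg fun i _ => (hμ.stochastic _).1 _ _)

lemma IsMarkovMeasure.mgf_windowSum [DecidableEq S] (hμ : IsMarkovMeasure μ A P π)
    (φ : S → S → ℝ) (l : ℝ) (k : ℤ) (m : ℕ) :
    mgf (windowSum φ k m) μ l =
      π k ⬝ᵥ ((List.ofFn fun i : Fin m => tilt l φ (P (k + (i : ℕ)))).prod *ᵥ 1) := by
  have := hμ.isProb
  calc mgf (windowSum φ k m) μ l
      = ∫ w, Real.exp (l * wordSum φ w) ∂μ.map (window k m) := by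
        rw [windowSum_eq_wordSum_comp_window,
          ← mgf_map (measurable_window k m).aemeasurable .of_discrete, mgf]
    _ = ∑ w, (μ.map (window k m)).real {w} * Real.exp (l * wordSum φ w) :=
        integral_fintype .of_finite
    _ = ∑ w : Fin (m + 1) → S, π k (w 0) *
          ∏ i : Fin m, tilt l φ (P (k + (i : ℕ))) (w i.castSucc) (w i.succ) := by
        simp only [hμ.map_window_real_singleton, wordSum, Finset.mul_sum, Real.exp_sum,
          mul_assoc, ← Finset.prod_mul_distrib, tilt, Matrix.of_apply]
    _ = _ := sum_mul_prod_eq_dotProduct_prod_mulVec _ _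

lemma IsMarkovMeasure.measureReal_windowSum_nonneg_le [DecidableEq S]
    (hμ : IsMarkovMeasure μ A P π) (φ : S → S → ℝ) {l : ℝ} (hl : 0 ≤ l) (k : ℤ) (m : ℕ) :
    μ.real {x | 0 ≤ windowSum φ k m x} ≤
      π k ⬝ᵥ ((List.ofFn fun i : Fin m => tilt l φ (P (k + (i : ℕ)))).prod *ᵥ 1) := by
  have := hμ.isProb
  have hint : Integrable (fun x => Real.exp (l * windowSum φ k m x)) μ := by
    rw [windowSum_eq_wordSum_comp_window]
    exact Integrable.comp_measurable (g := fun w => Real.exp (l * wordSum φ w)) .of_finite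
      (measurable_window k m)
  simpa [hμ.mgf_windowSum] using measure_ge_le_exp_mul_mgf 0 hl hint

end Moments

/-! ### Large deviations of window sums -/

section Tilt

variable {S : Type*} [Fintype S]

/-- Second order expansion of `exp`: the drift dominates the quadratic term when `l` is small. -/
lemma exists_sum_mul_exp_le_one_sub (g : S → ℝ) {ε : ℝ} (hε : 0 < ε) :
    ∃ l > 0, ∃ η > 0, ∀ p ∈ stdSimplex ℝ S, p ⬝ᵥ g ≤ -ε →
      ∑ b, p b * Real.exp (l * g b) ≤ 1 - η := by
  set C := ‖g‖ + 1
  have hC : 0 < C := by positivity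
  have hgC (b : S) : |g b| ≤ C := (norm_le_pi_norm g b).trans (by simp [C])
  set l := min C⁻¹ (ε / (2 * C ^ 2))
  have hl : 0 < l := lt_min (by positivity) (by positivity)
  have hlC : l * C ≤ 1 := (le_div_iff₀ hC).1 ((min_le_left _ _).trans_eq (one_div C).symm)
  have hlε : l * C ^ 2 ≤ ε / 2 := by
    rw [← le_div_iff₀ (by positivity), div_div]
    exact min_le_right _ _
  have hexp (b : S) : Real.exp (l * g b) ≤ 1 + l * g b + l * (ε / 2) := by
    have hlg : |l * g b| ≤ l * C := by
      rw [abs_mul, abs_of_pos hl]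
      exact mul_le_mul_of_nonneg_left (hgC b) hl.le
    have hquad := (abs_le.1 (Real.abs_exp_sub_one_sub_id_le (hlg.trans hlC))).2
    have hsq : (l * g b) ^ 2 ≤ l * (ε / 2) :=
      calc (l * g b) ^ 2 ≤ (l * C) ^ 2 := sq_le_sq' (abs_le.1 hlg).1 (abs_le.1 hlg).2
        _ = l * (l * C ^ 2) := by ring
        _ ≤ l * (ε / 2) := mul_le_mul_of_nonneg_left hlε hl.le
    linarith
  refine ⟨l, hl, l * (ε / 2), by positivity, fun p hp hdrift => ?_⟩
  calc ∑ b, p b * Real.exp (l * g b)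
      ≤ ∑ b, p b * (1 + l * g b + l * (ε / 2)) :=
        Finset.sum_le_sum fun b _ => mul_le_mul_of_nonneg_left (hexp b) (hp.1 b)
    _ = 1 + l * (p ⬝ᵥ g) + l * (ε / 2) := by
        simp only [mul_add, Finset.sum_add_distrib, ← Finset.sum_mul, hp.2, mul_left_comm _ l,
          ← Finset.mul_sum, dotProduct, one_mul, mul_one]
    _ ≤ 1 - l * (ε / 2) := by linarith [mul_le_mul_of_nonneg_left hdrift hl.le]

lemma isLeaky_tilt_single [DecidableEq S] {A : S → S → Bool} {R : S → S → ℝ} (hR : IsStochastic R)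
    {s : S} {g : S → ℝ} {δ η l : ℝ} (hl : 0 ≤ l) (hη : 0 ≤ η)
    (hedge : ∀ a b, A a b = true → δ ≤ R a b)
    (hrow : ∑ b, R s b * Real.exp (l * g b) ≤ 1 - η) :
    IsLeaky A s η (δ * Real.exp (-(l * ‖g‖))) (tilt l (Pi.single s g) R) where
  nonneg a b := mul_nonneg (hR.1 a b) (Real.exp_pos _).le
  sum_le_one a := by
    rcases eq_or_ne a s with rfl | ha
    · simpa [tilt] using hrow.trans (sub_le_self 1 hη)
    · simp [tilt, ha, hR.2 a]
  sum_le := by simpa [tilt] using hrow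
  le_of_edge a b hab := by
    have hbound : -‖g‖ ≤ (Pi.single s g : S → S → ℝ) a b := by
      rcases eq_or_ne a s with rfl | ha
      · simpa using (abs_le.1 (norm_le_pi_norm g b)).1
      · simp [ha]
    refine mul_le_mul (hedge a b hab) (Real.exp_le_exp.2 ?_) (Real.exp_pos _).le (hR.1 a b)
    rw [← mul_neg]
    exact mul_le_mul_of_nonneg_left hbound hl

lemma IsStochastic.mem_stdSimplex {R : S → S → ℝ} (hR : IsStochastic R) (s : S) :
    R s ∈ stdSimplex ℝ S :=
  ⟨hR.1 s, hR.2 s⟩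

end Tilt

section Drift

variable {S : Type*} [Fintype S] [MeasurableSpace S] [MeasurableSingletonClass S]
  {A : S → S → Bool} {P : ℤ → S → S → ℝ} {π : ℤ → S → ℝ} {μ : Measure (Seq S)}

lemma exists_measureReal_windowSum_nonneg_le_geometric [DecidableEq S] (hA : IsIrreducible A)
    (hμ : IsMarkovMeasure μ A P π) (hD : Doeblin A P) (s : S) (g : S → ℝ) {ε : ℝ} (hε : 0 < ε) :
    ∃ C r : ℝ, 0 ≤ r ∧ r < 1 ∧ ∀ (k : ℤ) (m : ℕ), (∀ i < m, P (k + i) s ⬝ᵥ g ≤ -ε) →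
      μ.real {x | 0 ≤ windowSum (Pi.single s g) k m x} ≤ C * r ^ m := by
  obtain ⟨δ, hδ, hPδ⟩ := hD
  obtain ⟨l, hl, η, hη, htilt⟩ := exists_sum_mul_exp_le_one_sub g hε
  obtain ⟨C, r, hr0, hr1, hdecay⟩ := hA.exists_dotProduct_prod_mulVec_one_le s hη
    (mul_pos hδ (Real.exp_pos (-(l * ‖g‖))))
  refine ⟨C, r, hr0, hr1, fun k m hdrift => ?_⟩
  have hleaky (i : Fin m) : IsLeaky A s η (δ * Real.exp (-(l * ‖g‖)))
      (tilt l (Pi.single s g) (P (k + (i : ℕ)))) :=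
    isLeaky_tilt_single (hμ.stochastic _) hl.le hη.le (fun a b => (hPδ _ a b).2)
      (htilt _ ((hμ.stochastic _).mem_stdSimplex s) (hdrift i i.2))
  refine (hμ.measureReal_windowSum_nonneg_le _ hl.le k m).trans ?_
  simpa using hdecay _ (List.forall_mem_ofFn_iff.2 hleaky) _ ⟨hμ.dist_nonneg k, hμ.dist_sum k⟩

lemma ae_eventually_windowSum_neg [DecidableEq S] (hA : IsIrreducible A)
    (hμ : IsMarkovMeasure μ A P π) (hD : Doeblin A P) {s : S} {g : S → ℝ} {ε : ℝ} (hε : 0 < ε)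
    (k : ℕ → ℤ) (hdrift : ∀ m, ∀ i < m, P (k m + (i : ℕ)) s ⬝ᵥ g ≤ -ε) :
    ∀ᵐ x ∂μ, ∀ᶠ m in atTop, windowSum (Pi.single s g) (k m) m x < 0 := by
  have := hμ.isProb
  obtain ⟨C, r, hr0, hr1, hbound⟩ :=
    exists_measureReal_windowSum_nonneg_le_geometric hA hμ hD s g hε
  have hsummable : Summable fun m => C * r ^ m :=
    (summable_geometric_of_lt_one hr0 hr1).mul_left C
  have hle (m : ℕ) : μ {x | 0 ≤ windowSum (Pi.single s g) (k m) m x} ≤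
      ENNReal.ofReal (C * r ^ m) := by
    rw [← ofReal_measureReal]
    exact ENNReal.ofReal_le_ofReal (hbound (k m) m (hdrift m))
  filter_upwards [ae_eventually_notMem
    (ne_top_of_le_ne_top hsummable.tsum_ofReal_ne_top (ENNReal.tsum_le_tsum hle))] with x hx
  exact hx.mono fun m hm => not_le.1 hm

lemma not_eventually_drift_separated (hA : IsIrreducible A) (hμ : IsMarkovMeasure μ A P π)
    (hD : Doeblin A P) (hcons : ShiftConservative μ) (s : S) (g : S → ℝ) {ε : ℝ} (hε : 0 < ε) :
    ¬ ((∀ᶠ n : ℕ in atTop, P n s ⬝ᵥ g ≤ -ε) ∧ ∀ᶠ n : ℕ in atTop, ε ≤ P (-n) s ⬝ᵥ g) := by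
  classical
  rintro ⟨hright, hleft⟩
  have := hμ.isProb
  obtain ⟨K, hK⟩ := eventually_atTop.1 (hright.and hleft)
  refine not_ae_windowSum_neg_and_pos hcons (Pi.single s g) K
    (ae_eventually_windowSum_neg hA hμ hD hε _ fun m i _ => ?_) ?_
  · exact_mod_cast (hK (K + i) (by lia)).1
  · have hneg := ae_eventually_windowSum_neg hA hμ hD (s := s) (g := -g) hε
      (fun m => -(K : ℤ) - m) fun m i hi => by
        have hn := (hK (K + (m - i)) (by lia)).2
        rw [show -((K + (m - i) : ℕ) : ℤ) = -K - m + i by lia] at hn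
        rw [dotProduct_neg]
        exact neg_le_neg hn
    simpa only [Pi.single_neg, windowSum_neg, neg_lt_zero] using hneg

lemma dotProduct_le_of_tendsto (hA : IsIrreducible A) (hμ : IsMarkovMeasure μ A P π)
    (hD : Doeblin A P) (hcons : ShiftConservative μ) {s : S} {q₁ q₂ : S → ℝ}
    (h₁ : Tendsto (fun n : ℕ => P n s) atTop (𝓝 q₁))
    (h₂ : Tendsto (fun n : ℕ => P (-n) s) atTop (𝓝 q₂)) (f : S → ℝ) :
    q₂ ⬝ᵥ f ≤ q₁ ⬝ᵥ f := by
  by_contra! hlt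
  set c := (q₁ ⬝ᵥ f + q₂ ⬝ᵥ f) / 2 with hc
  set ε := (q₂ ⬝ᵥ f - q₁ ⬝ᵥ f) / 4 with hε
  have hcentered (n : ℤ) : P n s ⬝ᵥ (f - fun _ => c) = P n s ⬝ᵥ f - c := by
    rw [dotProduct_sub, dotProduct, dotProduct, ← Finset.sum_mul, (hμ.stochastic n).2 s, one_mul]
  have hlim {p : ℕ → S → ℝ} {q : S → ℝ} (hp : Tendsto p atTop (𝓝 q)) :
      Tendsto (fun n => p n ⬝ᵥ f) atTop (𝓝 (q ⬝ᵥ f)) :=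
    ((continuous_id.dotProduct continuous_const).tendsto q).comp hp
  refine not_eventually_drift_separated hA hμ hD hcons s (f - fun _ => c)
    (show 0 < ε by linarith) ⟨?_, ?_⟩
  · filter_upwards [(hlim h₁).eventually_le_const (show q₁ ⬝ᵥ f < c - ε by linarith)] with n hn
    linarith [hcentered n]
  · filter_upwards [(hlim h₂).eventually_const_le (show c + ε < q₂ ⬝ᵥ f by linarith)] with n hn
    linarith [hcentered (-n)]

end Drift

theorem limits_eq_of_conservative_general
    {S : Type*} [Fintype S] [MeasurableSpace S] [MeasurableSingletonClass S]
    (A : S → S → Bool) (hA : IsIrreducible A)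
    (P : ℤ → S → S → ℝ) (π : ℤ → S → ℝ) (μ : Measure (Seq S))
    (hμ : IsMarkovMeasure μ A P π) (hD : Doeblin A P) (hcons : ShiftConservative μ)
    (Q₁ Q₂ : S → S → ℝ)
    (hQ₁ : Tendsto (fun n : ℕ => P (n : ℤ)) atTop (𝓝 Q₁))
    (hQ₂ : Tendsto (fun n : ℕ => P (-(n : ℤ))) atTop (𝓝 Q₂)) :
    Q₁ = Q₂ := by
  classical
  ext s t
  have hle (f : S → ℝ) : Q₂ s ⬝ᵥ f ≤ Q₁ s ⬝ᵥ f :=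
    dotProduct_le_of_tendsto hA hμ hD hcons (hQ₁.apply_nhds s) (hQ₂.apply_nhds s) f
  refine le_antisymm ?_ (by simpa using hle (Pi.single t 1))
  simpa using hle (-Pi.single t 1)

/-- **Theorem C (necessary condition for conservativeness).**
If the shift is nonsingular and conservative with respect to a Markov measure on a
topologically mixing SFT with the Doeblin condition, and both limits
`lim_{n→∞} P_n` and `lim_{n→∞} P_{-n}` exist, then they are equal. -/
theorem limits_eq_of_conservative
    {S : Type*} [Fintype S] [MeasurableSpace S] [MeasurableSingletonClass S]
    (A : S → S → Bool) (hA : IsPrimitive A)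
    (P : ℤ → S → S → ℝ) (π : ℤ → S → ℝ) (μ : Measure (Seq S))
    (hμ : IsMarkovMeasure μ A P π) (hD : Doeblin A P)
    (hns : ShiftNonsingular μ) (hcons : ShiftConservative μ)
    (Q₁ Q₂ : S → S → ℝ)
    (hQ₁ : Tendsto (fun n : ℕ => P (n : ℤ)) atTop (𝓝 Q₁))
    (hQ₂ : Tendsto (fun n : ℕ => P (-(n : ℤ))) atTop (𝓝 Q₂)) :
    Q₁ = Q₂ := by
  exact limits_eq_of_conservative_general A hA.isIrreducible P π μ hμ hD hcons Q₁ Q₂ hQ₁ hQ₂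

end MarkovSFT
end

section
/- Let Γ be a countable group of nonsingular automorphisms of a standard Borel probability space (X,μ). Then e(Γ) = ℝ if and only if every Γ̃-invariant function F ∈ L^∞(X̃, μ̃) of the Maharam extension is of the form F(x,t) = f(x) for μ̃-a.e. (x,t) ∈ X̃, for some function f on X. -/
/-!
Since `Γ` is countable, a partial isomorphism moving points along orbits agrees piecewise with
elements of `Γ`, and so does its logarithmic derivative. Essential values may thus be tested on
the elements of `Γ` alone.

Let the functions `h x : ℝ → Y` be uniformly equicontinuous with `h (γ x) (s - φ γ x) = h x s`. If
`r` is an essential value, every set of positive measure contains `x` and `γ x` with `φ γ x` close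
to `r`. On a set where `h x s` and `h x (s + r)` are nearly constant in `x`, this brings the two
constants together, so `r` is a period of `h x` for almost every `x`. We apply this to the
integrals of a bounded invariant function `F` over the windows `[s, s + t]` of the fibre over `x`.
If every real is an essential value, these integrals depend on the length of the window only, so
`F (x, ·)` is almost everywhere constant by Lebesgue differentiation.

Conversely, the saturation `S` of `E × (-ε/2, ε/2)` under the Maharam extension is invariant. If
it is a union of fibres, then it contains almost all of `E × ℝ`, and a point `(x, t) ∈ S` with
`x ∈ E` and `|t - r| < ε/2` provides `γ` with `γ x ∈ E` and `|φ γ x - r| < ε`.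
-/

open MeasureTheory Filter Topology

namespace MaharamLemma

variable {X : Type*}

/-- `φ` is (a version of) `log dμ∘f/dμ` on the set `D`:
`μ(f(E)) = ∫_E e^{φ} dμ` for every measurable `E ⊆ D`. -/
def IsLogDeriv [MeasurableSpace X] (μ : Measure X) (f : X → X) (D : Set X)
    (φ : X → ℝ) : Prop :=
  ∀ E : Set X, E ⊆ D → MeasurableSet E →
    μ (f '' E) = ∫⁻ x in E, ENNReal.ofReal (Real.exp (φ x)) ∂μ

/-- A nonsingular partial isomorphism of `(X, μ)` together with (a version of) the
logarithm of its Radon–Nikodym derivative. -/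
structure PartialIso [MeasurableSpace X] (μ : Measure X) where
  dom : Set X
  toFun : X → X
  logDeriv : X → ℝ
  meas_dom : MeasurableSet dom
  meas_toFun : Measurable toFun
  meas_logDeriv : Measurable logDeriv
  injOn : Set.InjOn toFun dom
  deriv_spec : IsLogDeriv μ toFun dom logDeriv

/-- `r` is an essential value of the Radon–Nikodym cocycle of the equivalence
relation whose orbits are described by `Orb`. -/
def IsEssentialValueFor [MeasurableSpace X] (μ : Measure X)
    (Orb : X → X → Prop) (r : ℝ) : Prop :=
  ∀ E : Set X, MeasurableSet E → 0 < μ E → ∀ ε : ℝ, 0 < ε →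
    ∃ g : PartialIso μ,
      (∀ᵐ x ∂μ.restrict g.dom, Orb x (g.toFun x)) ∧
      0 < μ (E ∩ g.dom ∩ g.toFun ⁻¹' E ∩ {x | |g.logDeriv x - r| < ε})

/-- The measure `μ̃` of the Maharam extension on `X × ℝ`:
`dμ̃(x,t) = dμ(x) eᵗ dt`. -/
noncomputable def maharamMeasure [MeasurableSpace X] (μ : Measure X) :
    Measure (X × ℝ) :=
  μ.prod (MeasureTheory.volume.withDensity fun t => ENNReal.ofReal (Real.exp t))

/-- The Maharam extension of a nonsingular map `f` with log Radon–Nikodym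
derivative `φ`: `(x, t) ↦ (f x, t - φ x)`. -/
def maharamMap (f : X → X) (φ : X → ℝ) : X × ℝ → X × ℝ :=
  fun p => (f p.1, p.2 - φ p.1)

section AlmostEverywhere

variable [MeasurableSpace X] {μ : Measure X}

lemma exists_measure_pos_of_ae_mem_imp_exists_mem {ι : Type*} [Countable ι] {S : Set X}
    {T : ι → Set X} (hS : 0 < μ S) (hST : ∀ᵐ x ∂μ, x ∈ S → ∃ i, x ∈ T i) :
    ∃ i, 0 < μ (T i) := by
  have hle : S ≤ᵐ[μ] ⋃ i, T i := by
    filter_upwards [hST] with x hx hxS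
    exact Set.mem_iUnion.2 (hx hxS)
  exact exists_measure_pos_of_not_measure_iUnion_null (hS.trans_le (measure_mono_ae hle)).ne'

lemma exists_measure_pos_of_not_ae_eq {Y : Type*} [MetricSpace Y] [SecondCountableTopology Y]
    {f g : X → Y} (hfg : ¬ f =ᵐ[μ] g) :
    ∃ y : Y, ∃ δ > 0, 0 < μ {x | dist (g x) y < δ ∧ 2 * δ < dist (f x) y} := by
  obtain ⟨D, hDcount, hD⟩ := TopologicalSpace.exists_countable_dense Y
  have := hDcount.to_subtype
  let T : D × {δ : ℚ // 0 < δ} → Set X := fun i =>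
    {x | dist (g x) i.1 < i.2 ∧ 2 * (i.2 : ℝ) < dist (f x) i.1}
  have hcover : ∀ x ∈ {x | f x ≠ g x}, ∃ i, x ∈ T i := by
    intro x hx
    obtain ⟨δ, hδ, hδx⟩ := exists_rat_btwn (div_pos (dist_pos.2 hx) three_pos)
    obtain ⟨y, hyD, hy⟩ := hD.exists_dist_lt (g x) hδ
    refine ⟨(⟨y, hyD⟩, ⟨δ, mod_cast hδ⟩), hy, ?_⟩
    change 2 * (δ : ℝ) < dist (f x) y
    linarith [dist_triangle_right (f x) (g x) y]
  obtain ⟨⟨y, δ⟩, hpos⟩ := exists_measure_pos_of_ae_mem_imp_exists_mem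
    (pos_iff_ne_zero.2 (mt ae_iff.2 hfg)) (Eventually.of_forall hcover)
  exact ⟨y, δ, mod_cast δ.2, hpos⟩

end AlmostEverywhere

section LogDeriv

variable [MeasurableSpace X] {μ : Measure X} {f g : X → X} {φ ψ : X → ℝ} {D : Set X}

lemma IsLogDeriv.mono {E : Set X} (hφ : IsLogDeriv μ f D φ) (hED : E ⊆ D) :
    IsLogDeriv μ f E φ :=
  fun A hAE hA => hφ A (hAE.trans hED) hA

lemma IsLogDeriv.ae_eq_of_eqOn [SigmaFinite μ] (hφ : IsLogDeriv μ f D φ)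
    (hψ : IsLogDeriv μ g D ψ) (hfg : Set.EqOn f g D) (hD : MeasurableSet D)
    (hφm : Measurable φ) (hψm : Measurable ψ) : φ =ᵐ[μ.restrict D] ψ := by
  have hexp : (fun x => ENNReal.ofReal (Real.exp (φ x))) =ᵐ[μ.restrict D]
      fun x => ENNReal.ofReal (Real.exp (ψ x)) := by
    refine ae_eq_of_forall_setLIntegral_eq_of_sigmaFinite (by fun_prop) (by fun_prop) ?_
    intro A hA _
    rw [Measure.restrict_restrict hA, ← hφ _ Set.inter_subset_right (hA.inter hD),
      ← hψ _ Set.inter_subset_right (hA.inter hD), (hfg.mono Set.inter_subset_right).image_eq]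
  filter_upwards [hexp] with x hx
  rwa [ENNReal.ofReal_eq_ofReal_iff (Real.exp_nonneg _) (Real.exp_nonneg _), Real.exp_eq_exp] at hx

lemma IsLogDeriv.comap_eq_withDensity (hφ : IsLogDeriv μ f Set.univ φ)
    (hf : MeasurableEmbedding f) :
    μ.comap f = μ.withDensity fun x => ENNReal.ofReal (Real.exp (φ x)) := by
  ext A hA
  rw [hf.comap_apply, withDensity_apply _ hA, hφ A (Set.subset_univ A) hA]

lemma IsLogDeriv.comp (hψ : IsLogDeriv μ g (Set.range f) ψ) (hφ : IsLogDeriv μ f Set.univ φ)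
    (hf : MeasurableEmbedding f) (hψm : Measurable ψ) (hφm : Measurable φ) :
    IsLogDeriv μ (g ∘ f) Set.univ fun x => ψ (f x) + φ x := by
  intro A _ hA
  have hfm := hf.measurable
  rw [Set.image_comp, hψ _ (Set.image_subset_range f A) (hf.measurableSet_image.2 hA)]
  calc ∫⁻ y in f '' A, ENNReal.ofReal (Real.exp (ψ y)) ∂μ
      = ∫⁻ x in A, ENNReal.ofReal (Real.exp (ψ (f x))) ∂μ.comap f := by
        rw [hf.restrict_comap, ← hf.lintegral_map (fun y => ENNReal.ofReal (Real.exp (ψ y))),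
          hf.map_comap, Measure.restrict_restrict hf.measurableSet_range,
          Set.inter_eq_right.2 (Set.image_subset_range f A)]
    _ = ∫⁻ x in A, ENNReal.ofReal (Real.exp (φ x)) * ENNReal.ofReal (Real.exp (ψ (f x))) ∂μ := by
        rw [hφ.comap_eq_withDensity hf,
          setLIntegral_withDensity_eq_setLIntegral_mul μ (by fun_prop) (by fun_prop) hA]
        rfl
    _ = ∫⁻ x in A, ENNReal.ofReal (Real.exp (ψ (f x) + φ x)) ∂μ := by
        simp only [← ENNReal.ofReal_mul (Real.exp_nonneg _), ← Real.exp_add, add_comm]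

end LogDeriv

section NonsingularAction

variable [MeasurableSpace X] {Γ : Type*} {μ : Measure X} {R : Γ → X → X} {φ : Γ → X → ℝ}

/-- The group `Γ` acts on `X` through `R` by nonsingular automorphisms of `μ`, and `φ γ` is a
version of `log dμ∘R γ/dμ`. Each `φ γ` is only determined almost everywhere, so the cocycle
identity for `φ` holds almost everywhere and is not part of the definition. -/
structure IsNonsingularAction [Group Γ] (μ : Measure X) (R : Γ → X → X) (φ : Γ → X → ℝ) :
    Prop where
  map_one : R 1 = id
  map_mul : ∀ γ δ : Γ, R (γ * δ) = R γ ∘ R δ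
  measurable : ∀ γ, Measurable (R γ)
  measurable_logDeriv : ∀ γ, Measurable (φ γ)
  isLogDeriv : ∀ γ, IsLogDeriv μ (R γ) Set.univ (φ γ)

/-- `r` is an essential value of the family of maps `R γ` with logarithmic derivatives `φ γ`.
In contrast to `IsEssentialValueFor`, returns to `E` are realised by a single map `R γ` and not by
a partial isomorphism pieced together from several of them. -/
def IsEssentialValue (μ : Measure X) (R : Γ → X → X) (φ : Γ → X → ℝ) (r : ℝ) : Prop :=
  ∀ E : Set X, MeasurableSet E → 0 < μ E → ∀ ε : ℝ, 0 < ε →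
    ∃ γ : Γ, 0 < μ (E ∩ R γ ⁻¹' E ∩ {x | |φ γ x - r| < ε})

namespace IsNonsingularAction

variable [Group Γ]

lemma measurableEmbedding (h : IsNonsingularAction μ R φ) (γ : Γ) :
    MeasurableEmbedding (R γ) :=
  MeasurableEquiv.measurableEmbedding
    { toFun := R γ
      invFun := R γ⁻¹
      left_inv x := by rw [← Function.comp_apply (f := R γ⁻¹), ← h.map_mul]; simp [h.map_one]
      right_inv x := by rw [← Function.comp_apply (f := R γ), ← h.map_mul]; simp [h.map_one]
      measurable_toFun := h.measurable γ
      measurable_invFun := h.measurable γ⁻¹ }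

lemma ae_logDeriv_mul [SigmaFinite μ] (h : IsNonsingularAction μ R φ) (γ δ : Γ) :
    ∀ᵐ x ∂μ, φ (γ * δ) x = φ γ (R δ x) + φ δ x := by
  have hcomp : IsLogDeriv μ (R γ ∘ R δ) Set.univ fun x => φ γ (R δ x) + φ δ x :=
    ((h.isLogDeriv γ).mono (Set.subset_univ _)).comp (h.isLogDeriv δ) (h.measurableEmbedding δ)
      (h.measurable_logDeriv γ) (h.measurable_logDeriv δ)
  have heq := (h.isLogDeriv (γ * δ)).ae_eq_of_eqOn hcomp
    (fun x _ => congrFun (h.map_mul γ δ) x) MeasurableSet.univ (h.measurable_logDeriv _)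
    (((h.measurable_logDeriv γ).comp (h.measurable δ)).add (h.measurable_logDeriv δ))
  rwa [Measure.restrict_univ] at heq

lemma ae_logDeriv_one [SigmaFinite μ] (h : IsNonsingularAction μ R φ) :
    ∀ᵐ x ∂μ, φ 1 x = 0 := by
  filter_upwards [h.ae_logDeriv_mul 1 1] with x hx
  simpa [h.map_one] using hx

/-- The element `γ` of a nonsingular action as an everywhere defined partial isomorphism. -/
def partialIso (h : IsNonsingularAction μ R φ) (γ : Γ) : PartialIso μ where
  dom := Set.univ
  toFun := R γ
  logDeriv := φ γ
  meas_dom := MeasurableSet.univ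
  meas_toFun := h.measurable γ
  meas_logDeriv := h.measurable_logDeriv γ
  injOn := (h.measurableEmbedding γ).injective.injOn
  deriv_spec := h.isLogDeriv γ

lemma ae_logDeriv_partialIso_eq [Countable Γ] [MeasurableEq X] [SigmaFinite μ]
    (h : IsNonsingularAction μ R φ) (g : PartialIso μ) :
    ∀ᵐ x ∂μ, x ∈ g.dom → ∀ γ, g.toFun x = R γ x → g.logDeriv x = φ γ x := by
  have hpiece (γ : Γ) : ∀ᵐ x ∂μ, x ∈ g.dom ∩ {x | g.toFun x = R γ x} →
      g.logDeriv x = φ γ x := by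
    have hD : MeasurableSet (g.dom ∩ {x | g.toFun x = R γ x}) :=
      g.meas_dom.inter (measurableSet_eq_fun g.meas_toFun (h.measurable γ))
    exact (ae_restrict_iff' hD).1 <| (g.deriv_spec.mono Set.inter_subset_left).ae_eq_of_eqOn
      ((h.isLogDeriv γ).mono (Set.subset_univ _)) (fun x hx => hx.2) hD g.meas_logDeriv
      (h.measurable_logDeriv γ)
  filter_upwards [ae_all_iff.2 hpiece] with x hx hxdom γ hγ
  exact hx γ ⟨hxdom, hγ⟩

lemma isEssentialValueFor_iff [Countable Γ] [MeasurableEq X] [SigmaFinite μ]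
    (h : IsNonsingularAction μ R φ) {r : ℝ} :
    IsEssentialValueFor μ (fun x y => ∃ γ, y = R γ x) r ↔ IsEssentialValue μ R φ r := by
  constructor
  · intro hr E hE hEpos ε hε
    obtain ⟨g, horbit, hpos⟩ := hr E hE hEpos ε hε
    refine exists_measure_pos_of_ae_mem_imp_exists_mem hpos ?_
    filter_upwards [(ae_restrict_iff' g.meas_dom).1 horbit, h.ae_logDeriv_partialIso_eq g]
      with x hxorbit hxderiv
    rintro ⟨⟨⟨hxE, hxdom⟩, hgxE⟩, hxr⟩
    obtain ⟨γ, hγ⟩ := hxorbit hxdom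
    refine ⟨γ, ⟨hxE, ?_⟩, ?_⟩
    · rwa [Set.mem_preimage, ← hγ]
    · rwa [Set.mem_ofPred_eq, ← hxderiv hxdom γ hγ]
  · intro hr E hE hEpos ε hε
    obtain ⟨γ, hγ⟩ := hr E hE hEpos ε hε
    exact ⟨h.partialIso γ, Eventually.of_forall fun x => ⟨γ, rfl⟩, by simpa [partialIso] using hγ⟩

end IsNonsingularAction

/-- Points of `E` that return to `E` with `φ γ x` close to `r` see nearly the same value of `h` at
`s` and at `s + r`, hence `E` cannot be chosen so as to separate these two values. -/
lemma IsEssentialValue.ae_add_eq {Y : Type*} [MetricSpace Y] [SecondCountableTopology Y]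
    [MeasurableSpace Y] [OpensMeasurableSpace Y] {r : ℝ} (hr : IsEssentialValue μ R φ r)
    {h : X → ℝ → Y} (hmeas : ∀ s, Measurable fun x => h x s) (hcont : UniformEquicontinuous h)
    (hequiv : ∀ᵐ x ∂μ, ∀ γ s, h (R γ x) (s - φ γ x) = h x s) (s : ℝ) :
    ∀ᵐ x ∂μ, h x (s + r) = h x s := by
  by_contra hne
  obtain ⟨y, δ, hδ, hpos⟩ := exists_measure_pos_of_not_ae_eq hne
  obtain ⟨ε, hε, hδε⟩ := Metric.uniformEquicontinuous_iff.1 hcont δ hδ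
  have hE : MeasurableSet {x | dist (h x s) y < δ ∧ 2 * δ < dist (h x (s + r)) y} :=
    (measurableSet_lt ((hmeas s).dist measurable_const) measurable_const).inter
      (measurableSet_lt measurable_const ((hmeas (s + r)).dist measurable_const))
  obtain ⟨γ, hγ⟩ := hr _ hE hpos ε hε
  obtain ⟨x, ⟨⟨⟨_, hfar⟩, hnear, _⟩, hxr⟩, hx⟩ :=
    ((frequently_ae_mem_iff.2 hγ.ne').and_eventually hequiv).exists
  have hclose : dist (h x (s + r)) (h (R γ x) s) < δ := by
    rw [← hx γ (s + r)]
    refine hδε _ _ ?_ _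
    rwa [Real.dist_eq, add_sub_assoc, add_sub_cancel_left, abs_sub_comm]
  linarith [dist_triangle (h x (s + r)) (h (R γ x) s) y]

end NonsingularAction

section Windows

lemma intervalIntegrable_of_locallyIntegrable {V : Type*} [NormedAddCommGroup V] {f : ℝ → V}
    (hf : LocallyIntegrable f) (a b : ℝ) : IntervalIntegrable f volume a b :=
  (hf.integrableOn_isCompact isCompact_uIcc).intervalIntegrable

variable {V : Type*} [NormedAddCommGroup V] [NormedSpace ℝ V] {f : ℝ → V}

lemma lipschitzWith_integral_window (hf : ∀ a b, IntervalIntegrable f volume a b) {C : NNReal}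
    (hC : ∀ u, ‖f u‖ ≤ C) (t : ℝ) : LipschitzWith (C + C) fun s => ∫ u in s..s + t, f u := by
  refine LipschitzWith.of_dist_le_mul fun s s' => ?_
  have hbound (a b : ℝ) : ‖∫ u in a..b, f u‖ ≤ C * |b - a| :=
    intervalIntegral.norm_integral_le_of_norm_le_const fun u _ => hC u
  calc dist (∫ u in s..s + t, f u) (∫ u in s'..s' + t, f u)
      = ‖(∫ u in s..s', f u) - ∫ u in s + t..s' + t, f u‖ := by
        rw [dist_eq_norm,
          intervalIntegral.integral_interval_sub_interval_comm (hf _ _) (hf _ _) (hf _ _)]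
    _ ≤ C * |s' - s| + C * |s' + t - (s + t)| :=
        (norm_sub_le _ _).trans (add_le_add (hbound _ _) (hbound _ _))
    _ = ↑(C + C) * dist s s' := by
        rw [add_sub_add_right_eq_sub, dist_comm, Real.dist_eq, NNReal.coe_add, add_mul]

lemma integral_eq_smul_of_forall_rat_window_eq (hf : ∀ a b, IntervalIntegrable f volume a b)
    (hwindow : ∀ t r : ℚ, ∫ u in (r : ℝ)..r + t, f u = ∫ u in (0 : ℝ)..t, f u) (t : ℝ) :
    ∫ u in (0 : ℝ)..t, f u = t • ∫ u in (0 : ℝ)..1, f u := by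
  have hcont : Continuous fun t => ∫ u in (0 : ℝ)..t, f u :=
    intervalIntegral.continuous_primitive hf 0
  have hadd : (fun p : ℝ × ℝ => ∫ u in (0 : ℝ)..p.1 + p.2, f u) =
      fun p => (∫ u in (0 : ℝ)..p.1, f u) + ∫ u in (0 : ℝ)..p.2, f u := by
    refine (Rat.denseRange_cast.prodMap Rat.denseRange_cast).equalizer
      (by fun_prop) (by fun_prop) ?_
    ext ⟨r, t⟩
    simp [← hwindow t r, intervalIntegral.integral_add_adjacent_intervals (hf _ _) (hf _ _)]
  let primitive : ℝ →+ V :=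
    AddMonoidHom.mk' (fun t => ∫ u in (0 : ℝ)..t, f u) fun r t => congrFun hadd (r, t)
  simpa [primitive] using map_real_smul primitive hcont t 1

lemma ae_eq_const_of_forall_rat_window_eq [CompleteSpace V] (hf : LocallyIntegrable f)
    (hwindow : ∀ t r : ℚ, ∫ u in (r : ℝ)..r + t, f u = ∫ u in (0 : ℝ)..t, f u) :
    ∀ᵐ u, f u = ∫ v in (0 : ℝ)..1, f v := by
  filter_upwards [LocallyIntegrable.ae_hasDerivAt_integral hf] with u hu
  have hlinear : HasDerivAt (fun t => ∫ v in (0 : ℝ)..t, f v) (∫ v in (0 : ℝ)..1, f v) u := by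
    rw [funext (integral_eq_smul_of_forall_rat_window_eq
      (intervalIntegrable_of_locallyIntegrable hf) hwindow)]
    simpa using (hasDerivAt_id u).smul_const (∫ v in (0 : ℝ)..1, f v)
  exact (hu 0).unique hlinear

end Windows

section Maharam

variable [MeasurableSpace X] {μ : Measure X}

lemma ae_maharamMeasure :
    ae (maharamMeasure μ) = ae (μ.prod (volume : Measure ℝ)) := by
  have hdensity : AEMeasurable (fun t : ℝ => ENNReal.ofReal (Real.exp t)) := by fun_prop
  have hpos : ∀ᵐ t : ℝ, ENNReal.ofReal (Real.exp t) ≠ 0 :=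
    Eventually.of_forall fun t => by simp [Real.exp_pos]
  exact le_antisymm
    (Measure.AbsolutelyContinuous.rfl.prod (withDensity_absolutelyContinuous _ _)).ae_le
    (Measure.AbsolutelyContinuous.rfl.prod
      (withDensity_absolutelyContinuous' hdensity hpos)).ae_le

lemma measurable_maharamMap {f : X → X} {φ : X → ℝ} (hf : Measurable f) (hφ : Measurable φ) :
    Measurable (maharamMap f φ) :=
  (hf.comp measurable_fst).prodMk (measurable_snd.sub (hφ.comp measurable_fst))

lemma ae_integral_fiber_eq_of_comp_maharamMap_ae_eq {V : Type*} [NormedAddCommGroup V]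
    [NormedSpace ℝ V] {F : X × ℝ → V} {f : X → X} {φ : X → ℝ}
    (hinv : F ∘ maharamMap f φ =ᵐ[maharamMeasure μ] F) :
    ∀ᵐ x ∂μ, ∀ s t, ∫ u in s - φ x..t - φ x, F (f x, u) = ∫ u in s..t, F (x, u) := by
  rw [EventuallyEq, ae_maharamMeasure] at hinv
  filter_upwards [Measure.ae_ae_of_ae_prod hinv] with x hx s t
  rw [← intervalIntegral.integral_comp_sub_right fun u => F (f x, u)]
  refine intervalIntegral.integral_congr_ae ?_
  filter_upwards [hx] with u hu _
  exact hu

lemma locallyIntegrable_fiber {V : Type*} [NormedAddCommGroup V] [SecondCountableTopology V]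
    [MeasurableSpace V] [OpensMeasurableSpace V] {F : X × ℝ → V} (hF : Measurable F) {C : NNReal}
    (hC : ∀ p, ‖F p‖ ≤ C) (x : X) : LocallyIntegrable fun u => F (x, u) :=
  (locallyIntegrable_const (C : ℝ)).mono
    (hF.comp measurable_prodMk_left).stronglyMeasurable.aestronglyMeasurable
    (Eventually.of_forall fun u => (hC (x, u)).trans (le_abs_self _))

variable {Γ : Type*} {R : Γ → X → X} {φ : Γ → X → ℝ}

section Bounded

variable {V : Type*} [NormedAddCommGroup V] [NormedSpace ℝ V] [SecondCountableTopology V]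
  [MeasurableSpace V] [BorelSpace V] {F : X × ℝ → V}

lemma measurable_integral_fiber (hF : Measurable F) (s t : ℝ) :
    Measurable fun x => ∫ u in s..t, F (x, u) :=
  hF.stronglyMeasurable.integral_prod_right'.measurable.sub
    hF.stronglyMeasurable.integral_prod_right'.measurable

lemma ae_window_integral_eq_of_isEssentialValue [Countable Γ] {r : ℝ}
    (hr : IsEssentialValue μ R φ r) (hF : Measurable F) {C : NNReal} (hC : ∀ p, ‖F p‖ ≤ C)
    (hinv : ∀ γ, F ∘ maharamMap (R γ) (φ γ) =ᵐ[maharamMeasure μ] F) (s t : ℝ) :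
    ∀ᵐ x ∂μ, ∫ u in s + r..s + r + t, F (x, u) = ∫ u in s..s + t, F (x, u) := by
  refine hr.ae_add_eq (h := fun x s => ∫ u in s..s + t, F (x, u))
    (fun s => measurable_integral_fiber hF s (s + t)) ?_ ?_ s
  · exact LipschitzWith.uniformEquicontinuous _ (C + C) fun x =>
      lipschitzWith_integral_window
        (intervalIntegrable_of_locallyIntegrable (locallyIntegrable_fiber hF hC x))
        (fun u => hC (x, u)) t
  · filter_upwards [ae_all_iff.2 fun γ => ae_integral_fiber_eq_of_comp_maharamMap_ae_eq (hinv γ)]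
      with x hx γ s
    rw [sub_add_eq_add_sub, hx]

lemma ae_eq_integral_fiber_of_forall_isEssentialValue [CompleteSpace V] [Countable Γ]
    (hess : ∀ r, IsEssentialValue μ R φ r) (hF : Measurable F) {C : NNReal}
    (hC : ∀ p, ‖F p‖ ≤ C)
    (hinv : ∀ γ, F ∘ maharamMap (R γ) (φ γ) =ᵐ[maharamMeasure μ] F) :
    F =ᵐ[maharamMeasure μ] fun p => ∫ u in (0 : ℝ)..1, F (p.1, u) := by
  rw [EventuallyEq, ae_maharamMeasure]
  refine (Measure.ae_prod_iff_ae_ae (measurableSet_eq_fun hF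
    ((measurable_integral_fiber hF 0 1).comp measurable_fst))).2 ?_
  have hwindow : ∀ᵐ x ∂μ, ∀ t r : ℚ,
      ∫ u in (r : ℝ)..r + t, F (x, u) = ∫ u in (0 : ℝ)..t, F (x, u) := by
    simp only [ae_all_iff]
    intro t r
    simpa using ae_window_integral_eq_of_isEssentialValue (hess r) hF hC hinv 0 t
  filter_upwards [hwindow] with x hx
  exact ae_eq_const_of_forall_rat_window_eq (locallyIntegrable_fiber hF hC x) hx

end Bounded

theorem exists_ae_eq_comp_fst_of_forall_isEssentialValue [Countable Γ]
    (hess : ∀ r, IsEssentialValue μ R φ r) {F : X × ℝ → ℝ} (hF : Measurable F)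
    (hinv : ∀ γ, F ∘ maharamMap (R γ) (φ γ) =ᵐ[maharamMeasure μ] F) :
    ∃ f : X → ℝ, F =ᵐ[maharamMeasure μ] fun p => f p.1 := by
  have hbounded : ∀ p, ‖Real.arctan (F p)‖ ≤ (⟨Real.pi / 2, by positivity⟩ : NNReal) := fun p =>
    abs_le.2 ⟨(Real.neg_pi_div_two_lt_arctan _).le, (Real.arctan_lt_pi_div_two _).le⟩
  have harctan := ae_eq_integral_fiber_of_forall_isEssentialValue hess hF.arctan hbounded
    fun γ => (hinv γ).fun_comp Real.arctan
  refine ⟨fun x => Real.tan (∫ u in (0 : ℝ)..1, Real.arctan (F (x, u))), ?_⟩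
  filter_upwards [harctan] with p hp
  rw [← hp, Real.tan_arctan]

/-- The saturation of `B` under the Maharam extension of the action `R`: the smallest invariant
set containing `B`, up to null sets. -/
def maharamSaturation (R : Γ → X → X) (φ : Γ → X → ℝ) (B : Set (X × ℝ)) : Set (X × ℝ) :=
  ⋃ γ, maharamMap (R γ) (φ γ) ⁻¹' B

namespace IsNonsingularAction

variable [Group Γ]

lemma ae_maharamMap_one [SigmaFinite μ] (h : IsNonsingularAction μ R φ) :
    ∀ᵐ p ∂maharamMeasure μ, maharamMap (R 1) (φ 1) p = p := by
  rw [ae_maharamMeasure]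
  filter_upwards [Measure.quasiMeasurePreserving_fst.ae h.ae_logDeriv_one] with p hp
  simp [maharamMap, h.map_one, hp]

lemma ae_maharamMap_mul [SigmaFinite μ] (h : IsNonsingularAction μ R φ) (γ δ : Γ) :
    ∀ᵐ p ∂maharamMeasure μ, maharamMap (R (γ * δ)) (φ (γ * δ)) p =
      maharamMap (R γ) (φ γ) (maharamMap (R δ) (φ δ) p) := by
  rw [ae_maharamMeasure]
  filter_upwards [Measure.quasiMeasurePreserving_fst.ae (h.ae_logDeriv_mul γ δ)] with p hp
  simp [maharamMap, h.map_mul, hp, sub_sub, add_comm]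

lemma measurableSet_maharamSaturation [Countable Γ] (h : IsNonsingularAction μ R φ)
    {B : Set (X × ℝ)} (hB : MeasurableSet B) : MeasurableSet (maharamSaturation R φ B) :=
  MeasurableSet.iUnion fun γ =>
    measurable_maharamMap (h.measurable γ) (h.measurable_logDeriv γ) hB

lemma ae_mem_maharamSaturation_of_mem [SigmaFinite μ] (h : IsNonsingularAction μ R φ)
    (B : Set (X × ℝ)) :
    ∀ᵐ p ∂maharamMeasure μ, p ∈ B → p ∈ maharamSaturation R φ B := by
  filter_upwards [h.ae_maharamMap_one] with p hp hpB
  exact Set.mem_iUnion.2 ⟨1, by rwa [Set.mem_preimage, hp]⟩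

lemma preimage_maharamSaturation_ae_eq [Countable Γ] [SigmaFinite μ]
    (h : IsNonsingularAction μ R φ) (B : Set (X × ℝ)) (δ : Γ) :
    maharamMap (R δ) (φ δ) ⁻¹' maharamSaturation R φ B =ᵐ[maharamMeasure μ]
      maharamSaturation R φ B := by
  rw [eventuallyEq_set]
  filter_upwards [ae_all_iff.2 fun γ => h.ae_maharamMap_mul γ δ] with p hp
  simp only [maharamSaturation, Set.mem_preimage, Set.mem_iUnion, ← hp]
  exact ((Group.mulRight_bijective δ).surjective.exists
    (p := fun γ => maharamMap (R γ) (φ γ) p ∈ B)).symm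

theorem isEssentialValue_of_invariant_sets [Countable Γ] [SigmaFinite μ]
    (h : IsNonsingularAction μ R φ)
    (hsets : ∀ S : Set (X × ℝ), MeasurableSet S →
      (∀ γ, maharamMap (R γ) (φ γ) ⁻¹' S =ᵐ[maharamMeasure μ] S) →
      ∃ T : Set X, S =ᵐ[maharamMeasure μ] Prod.fst ⁻¹' T) (r : ℝ) :
    IsEssentialValue μ R φ r := by
  intro E hE hEpos ε hε
  let S := maharamSaturation R φ (E ×ˢ Set.Ioo (-(ε / 2)) (ε / 2))
  have hvol (a : ℝ) : volume (Set.Ioo (a - ε / 2) (a + ε / 2)) ≠ 0 := by simp [hε]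
  obtain ⟨T, hST⟩ := hsets S (h.measurableSet_maharamSaturation (hE.prod measurableSet_Ioo))
    (h.preimage_maharamSaturation_ae_eq _)
  have hBS := h.ae_mem_maharamSaturation_of_mem (E ×ˢ Set.Ioo (-(ε / 2)) (ε / 2))
  rw [eventuallyEq_set, ae_maharamMeasure] at hST
  rw [ae_maharamMeasure] at hBS
  refine exists_measure_pos_of_ae_mem_imp_exists_mem hEpos ?_
  filter_upwards [Measure.ae_ae_of_ae_prod hST, Measure.ae_ae_of_ae_prod hBS] with x hxST hxBS hxE
  have hxT : x ∈ T := by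
    obtain ⟨t, ht, htST, htBS⟩ :=
      ((frequently_ae_mem_iff.2 (hvol 0)).and_eventually (hxST.and hxBS)).exists
    exact htST.1 (htBS ⟨hxE, by simpa using ht⟩)
  obtain ⟨t, ht, htST⟩ := ((frequently_ae_mem_iff.2 (hvol r)).and_eventually hxST).exists
  obtain ⟨γ, hγE, hγt⟩ := Set.mem_iUnion.1 (htST.2 hxT)
  refine ⟨γ, ⟨hxE, hγE⟩, ?_⟩
  rw [Set.mem_ofPred_eq, abs_lt]
  simp only [maharamMap, Set.mem_Ioo] at hγt
  constructor <;> linarith [ht.1, ht.2, hγt.1, hγt.2]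

end IsNonsingularAction

lemma exists_ae_eq_preimage_fst_of_indicator_ae_eq {S : Set (X × ℝ)} {f : X → ℝ}
    (hf : S.indicator 1 =ᵐ[maharamMeasure μ] fun p => f p.1) :
    ∃ T : Set X, S =ᵐ[maharamMeasure μ] Prod.fst ⁻¹' T := by
  refine ⟨f ⁻¹' {1}, ?_⟩
  rw [eventuallyEq_set]
  filter_upwards [hf] with p hp
  rw [Set.mem_preimage, Set.mem_preimage, Set.mem_singleton_iff, ← hp]
  exact (Set.indicator_eq_one_iff_mem ℝ).symm

end Maharam

theorem ratioSet_eq_univ_iff_maharam_invariant_functions_general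
    [MeasurableSpace X] [MeasurableEq X] {Γ : Type*} [Group Γ] [Countable Γ]
    {μ : Measure X} [SigmaFinite μ] {R : Γ → X → X} {φ : Γ → X → ℝ}
    (h : IsNonsingularAction μ R φ) :
    (∀ r : ℝ, IsEssentialValueFor μ (fun x y => ∃ γ : Γ, y = R γ x) r) ↔
      ∀ F : X × ℝ → ℝ, Measurable F →
        (∃ C : ℝ, ∀ᵐ p ∂(maharamMeasure μ), |F p| ≤ C) →
        (∀ γ : Γ, F ∘ maharamMap (R γ) (φ γ) =ᵐ[maharamMeasure μ] F) →
        ∃ f : X → ℝ, F =ᵐ[maharamMeasure μ] fun p => f p.1 := by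
  simp only [h.isEssentialValueFor_iff]
  constructor
  · intro hess F hF _ hinv
    exact exists_ae_eq_comp_fst_of_forall_isEssentialValue hess hF hinv
  · intro hfun
    refine h.isEssentialValue_of_invariant_sets fun S hS hinv => ?_
    have hbounded (p : X × ℝ) : |S.indicator (1 : X × ℝ → ℝ) p| ≤ 1 := by
      simpa using norm_indicator_le_norm_self (1 : X × ℝ → ℝ) p
    obtain ⟨f, hf⟩ := hfun (S.indicator 1) (measurable_one.indicator hS)
      ⟨1, Eventually.of_forall hbounded⟩ fun γ => indicator_ae_eq_of_ae_eq_set (hinv γ)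
    exact exists_ae_eq_preimage_fst_of_indicator_ae_eq hf

/-- **Lemma (ratio set and invariant functions of the Maharam extension).**
For a countable group `Γ` of nonsingular automorphisms `R` of a standard Borel
probability space `(X, μ)` (with `φ γ = log dμ∘R γ/dμ`), the ratio set of `Γ` is
all of `ℝ` if and only if every `Γ̃`-invariant `F ∈ L^∞(X̃, μ̃)` of the Maharam
extension is of the form `F(x,t) = f(x)` for `μ̃`-a.e. `(x,t)`. -/
theorem ratioSet_eq_univ_iff_maharam_invariant_functions
    [MeasurableSpace X] [StandardBorelSpace X]
    {Γ : Type*} [Group Γ] [Countable Γ]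
    (μ : Measure X) [IsProbabilityMeasure μ]
    (R : Γ → X → X) (φ : Γ → X → ℝ)
    (hRmeas : ∀ γ, Measurable (R γ))
    (hR1 : R 1 = id)
    (hRmul : ∀ γ δ : Γ, R (γ * δ) = R γ ∘ R δ)
    (hφmeas : ∀ γ, Measurable (φ γ))
    (hφ : ∀ γ : Γ, IsLogDeriv μ (R γ) Set.univ (φ γ)) :
    (∀ r : ℝ, IsEssentialValueFor μ (fun x y => ∃ γ : Γ, y = R γ x) r) ↔
      ∀ F : X × ℝ → ℝ, Measurable F →
        (∃ C : ℝ, ∀ᵐ p ∂(maharamMeasure μ), |F p| ≤ C) →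
        (∀ γ : Γ, F ∘ maharamMap (R γ) (φ γ) =ᵐ[maharamMeasure μ] F) →
        ∃ f : X → ℝ, F =ᵐ[maharamMeasure μ] fun p => f p.1 := by
  exact ratioSet_eq_univ_iff_maharam_invariant_functions_general ⟨hR1, hRmul, hRmeas, hφmeas, hφ⟩

end MaharamLemma
end

section
/- Let ν = ν_{(P_n : n ∈ ℤ)} and μ = μ_{(Q_n : n ∈ ℤ)} be Markov measures on a topologically mixing subshift of finite type X_A, both satisfying the Doeblin condition. Then ν is absolutely continuous with respect to μ if and only if Σ_{n≥1} Σ_{s,u,v,t ∈ S} (√(P̂_{−n}(u,s)·P_n(v,t)) − √(Q̂_{−n}(u,s)·Q_n(v,t)))² < ∞. In particular, since this criterion is symmetric in ν and μ, ν ≪ μ if and only if μ ≪ ν, so any two such measures are either equivalent or mutually singular in the sense that neither is absolutely continuous with respect to the other. -/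
open MeasureTheory Filter Topology

namespace MarkovSFT

/-- The reverse transition matrices `P̂_n(s,t) = π_{n-1}(t) P_{n-1}(t,s) / π_n(s)`. -/
noncomputable def reverseP {S : Type*} (P : ℤ → S → S → ℝ) (π : ℤ → S → ℝ)
    (n : ℤ) (s t : S) : ℝ :=
  if 0 < π n s then π (n - 1) t * P (n - 1) t s / π n s else 0

/-!
Reading a two-sided sequence outwards from time `0` turns each Markov measure into the law of a
one-sided inhomogeneous chain `(x₋ₙ, xₙ)`, whose transition matrices are the products of the reverse
and forward ones. The criterion asks that the squared Hellinger distances between the rows of these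
matrices be summable.

*Necessity.* The affinity of the laws of the first `n` steps of two chains is the total mass of a
product of `n` substochastic matrices, the entrywise geometric means of the transition matrices. If
`ν ≪ μ`, this mass stays away from `0`. By primitivity every block of `M + 1` steps, for a fixed
`M`, loses at least a constant multiple of the squared Hellinger distance at its last step, so these
distances are summable.

*Sufficiency.* The chain that follows the transitions of `ν` before time `m` and those of `μ`
afterwards has a law bounded by a multiple of `μ`, and for large `m` it is within `ε` of `ν`,
uniformly over cylinder events. Hence `ν t ≤ C * μ t + ε` for every cylinder `t`, and by
approximation `ν ≪ μ`.
-/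

open scoped Matrix

section Affinity

variable {ι : Type*} [Fintype ι]

/-- The affinity (Bhattacharyya coefficient) of two weights on a finite set. -/
noncomputable def affinity (a b : ι → ℝ) : ℝ := ∑ i, √(a i * b i)

theorem affinity_comm (a b : ι → ℝ) : affinity a b = affinity b a := by
  simp only [affinity, mul_comm]

theorem sq_sqrt_sub_sqrt {x y : ℝ} (hx : 0 ≤ x) (hy : 0 ≤ y) :
    (√x - √y) ^ 2 = x + y - 2 * √(x * y) := by
  rw [sub_sq, Real.sq_sqrt hx, Real.sq_sqrt hy, Real.sqrt_mul hx]
  ring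

theorem sum_sq_sqrt_sub_sqrt {a b : ι → ℝ} (ha : a ∈ stdSimplex ℝ ι) (hb : b ∈ stdSimplex ℝ ι) :
    ∑ i, (√(a i) - √(b i)) ^ 2 = 2 * (1 - affinity a b) := by
  simp only [sq_sqrt_sub_sqrt (ha.1 _) (hb.1 _), Finset.sum_sub_distrib, Finset.sum_add_distrib,
    ha.2, hb.2, ← Finset.mul_sum, affinity]
  ring

theorem affinity_le_one {a b : ι → ℝ} (ha : a ∈ stdSimplex ℝ ι) (hb : b ∈ stdSimplex ℝ ι) :
    affinity a b ≤ 1 := by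
  have h : 0 ≤ 2 * (1 - affinity a b) :=
    sum_sq_sqrt_sub_sqrt ha hb ▸ Finset.sum_nonneg fun _ _ => sq_nonneg _
  linarith

theorem sum_filter_le_affinity {a b : ι → ℝ} (hb : ∀ i, 0 ≤ b i) :
    ∑ i with b i ≤ a i, b i ≤ affinity a b := by
  calc ∑ i with b i ≤ a i, b i
    _ ≤ ∑ i with b i ≤ a i, √(a i * b i) := by
      refine Finset.sum_le_sum fun i hi => Real.le_sqrt_of_sq_le ?_
      rw [sq]
      exact mul_le_mul_of_nonneg_right (Finset.mem_filter.1 hi).2 (hb i)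
    _ ≤ affinity a b :=
      Finset.sum_le_univ_sum_of_nonneg fun _ => Real.sqrt_nonneg _

-- Pointwise this is `x ≤ 2 * y + 2 * (√x - √y) ^ 2`.
theorem sum_le_two_mul_sum_add {a b : ι → ℝ} (ha : a ∈ stdSimplex ℝ ι) (hb : b ∈ stdSimplex ℝ ι)
    (s : Finset ι) : ∑ i ∈ s, a i ≤ 2 * ∑ i ∈ s, b i + 4 * (1 - affinity a b) := by
  have hpoint (i : ι) : a i ≤ 2 * b i + 2 * (√(a i) - √(b i)) ^ 2 := by
    nlinarith [Real.sq_sqrt (ha.1 i), Real.sq_sqrt (hb.1 i), sq_nonneg (√(a i) - 2 * √(b i))]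
  calc ∑ i ∈ s, a i
    _ ≤ 2 * ∑ i ∈ s, b i + 2 * ∑ i ∈ s, (√(a i) - √(b i)) ^ 2 := by
      rw [Finset.mul_sum, Finset.mul_sum, ← Finset.sum_add_distrib]
      exact Finset.sum_le_sum fun i _ => hpoint i
    _ ≤ 2 * ∑ i ∈ s, b i + 2 * ∑ i, (√(a i) - √(b i)) ^ 2 := by
      gcongr
      exact Finset.subset_univ s
    _ = 2 * ∑ i ∈ s, b i + 4 * (1 - affinity a b) := by
      rw [sum_sq_sqrt_sub_sqrt ha hb]
      ring

end Affinity

section PathWeight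

variable {Y R : Type*}

/-- The weight `p(w₀) T₀(w₀, w₁) ⋯ Tₙ₋₁(wₙ₋₁, wₙ)` of the word `w` for the initial weights `p` and
the one-step weights `T`, which need not be stochastic. -/
def pathWeight [CommMonoid R] (p : Y → R) (T : ℕ → Matrix Y Y R) (n : ℕ) (w : Fin (n + 1) → Y) :
    R :=
  p (w 0) * ∏ i : Fin n, T i (w i.castSucc) (w i.succ)

theorem pathWeight_nonneg {p : Y → ℝ} {T : ℕ → Matrix Y Y ℝ} (hp : ∀ y, 0 ≤ p y)
    (hT : ∀ n y z, 0 ≤ T n y z) (n : ℕ) (w : Fin (n + 1) → Y) : 0 ≤ pathWeight p T n w :=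
  mul_nonneg (hp _) (Finset.prod_nonneg fun _ _ => hT _ _ _)

theorem pathWeight_cons [CommMonoid R] (p : Y → R) (T : ℕ → Matrix Y Y R) (n : ℕ) (y : Y)
    (w : Fin (n + 1) → Y) :
    pathWeight p T (n + 1) (Fin.cons y w : Fin (n + 2) → Y)
      = p y * pathWeight (T 0 y) (fun k => T (k + 1)) n w := by
  simp only [pathWeight, Fin.prod_univ_succ (n := n), ← Fin.succ_castSucc, Fin.castSucc_zero,
    Fin.cons_zero, Fin.cons_succ, Fin.val_zero, Fin.val_succ]

variable [Fintype Y] [DecidableEq Y]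

/-- The `n`-step transition matrix `T₀ T₁ ⋯ Tₙ₋₁` of an inhomogeneous chain. -/
def transitionProd [Semiring R] (T : ℕ → Matrix Y Y R) (n : ℕ) : Matrix Y Y R :=
  ((List.range n).map T).prod

theorem transitionProd_zero [Semiring R] (T : ℕ → Matrix Y Y R) : transitionProd T 0 = 1 := rfl

theorem transitionProd_succ [Semiring R] (T : ℕ → Matrix Y Y R) (n : ℕ) :
    transitionProd T (n + 1) = transitionProd T n * T n :=
  List.prod_range_succ T n

theorem transitionProd_succ' [Semiring R] (T : ℕ → Matrix Y Y R) (n : ℕ) :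
    transitionProd T (n + 1) = T 0 * transitionProd (fun k => T (k + 1)) n :=
  List.prod_range_succ' T n

theorem transitionProd_add [Semiring R] (T : ℕ → Matrix Y Y R) (m n : ℕ) :
    transitionProd T (m + n) = transitionProd T m * transitionProd (fun k => T (m + k)) n := by
  simp [transitionProd, List.range_add, Function.comp_def]

theorem sum_pathWeight [CommSemiring R] (p : Y → R) (T : ℕ → Matrix Y Y R) (n : ℕ) :
    ∑ w, pathWeight p T n w = p ⬝ᵥ (transitionProd T n *ᵥ 1) := by
  induction n generalizing p T with
  | zero =>
    rw [← (Equiv.funUnique (Fin 1) Y).symm.sum_comp]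
    simp [pathWeight, transitionProd_zero, dotProduct]
  | succ n ih =>
    calc ∑ w, pathWeight p T (n + 1) w
      _ = ∑ y, ∑ w : Fin (n + 1) → Y, pathWeight p T (n + 1) (Fin.cons y w : Fin (n + 2) → Y) := by
        rw [← (Fin.consEquiv fun _ : Fin (n + 2) => Y).sum_comp, Fintype.sum_prod_type]
        rfl
      _ = ∑ y, p y * (T 0 y ⬝ᵥ (transitionProd (fun k => T (k + 1)) n *ᵥ 1)) := by
        simp only [pathWeight_cons, ← Finset.mul_sum, ih]
      _ = p ⬝ᵥ (transitionProd T (n + 1) *ᵥ 1) := by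
        rw [transitionProd_succ', ← Matrix.mulVec_mulVec]
        rfl

theorem transitionProd_mulVec_one [Semiring R] {T : ℕ → Matrix Y Y R} (hT : ∀ n, T n *ᵥ 1 = 1)
    (n : ℕ) : transitionProd T n *ᵥ 1 = 1 := by
  induction n with
  | zero => simp [transitionProd_zero]
  | succ n ih => rw [transitionProd_succ, ← Matrix.mulVec_mulVec, hT, ih]

theorem transitionProd_nonneg {T : ℕ → Matrix Y Y ℝ} (hT : ∀ n y z, 0 ≤ T n y z) (n : ℕ)
    (y z : Y) : 0 ≤ transitionProd T n y z := by
  induction n generalizing z with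
  | zero => rw [transitionProd_zero, Matrix.one_apply]; positivity
  | succ n ih =>
    rw [transitionProd_succ, Matrix.mul_apply]
    exact Finset.sum_nonneg fun x _ => mul_nonneg (ih x) (hT _ _ _)

theorem pow_le_transitionProd_of_path {T : ℕ → Matrix Y Y ℝ} (hT : ∀ n y z, 0 ≤ T n y z) {δ : ℝ}
    (hδ : 0 ≤ δ) {n : ℕ} {u : ℕ → Y} (hu : ∀ i < n, δ ≤ T i (u i) (u (i + 1))) :
    δ ^ n ≤ transitionProd T n (u 0) (u n) := by
  induction n with
  | zero => simp [transitionProd_zero]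
  | succ n ih =>
    rw [pow_succ, transitionProd_succ, Matrix.mul_apply]
    calc δ ^ n * δ
      _ ≤ transitionProd T n (u 0) (u n) * T n (u n) (u (n + 1)) :=
        mul_le_mul (ih fun i hi => hu i (hi.trans n.lt_succ_self)) (hu n n.lt_succ_self) hδ
          (transitionProd_nonneg hT _ _ _)
      _ ≤ ∑ x, transitionProd T n (u 0) x * T n x (u (n + 1)) :=
        Finset.single_le_sum (f := fun x => transitionProd T n (u 0) x * T n x (u (n + 1)))
          (fun x _ => mul_nonneg (transitionProd_nonneg hT _ _ _) (hT _ _ _)) (Finset.mem_univ _)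

theorem IsPrimitive.exists_pow_le_transitionProd {A : Y → Y → Bool} (hA : IsPrimitive A) :
    ∃ M, ∀ (δ : ℝ) (T : ℕ → Matrix Y Y ℝ), 0 ≤ δ → (∀ n y z, 0 ≤ T n y z) →
      (∀ n y z, A y z = true → δ ≤ T n y z) → ∀ y z, δ ^ M ≤ transitionProd T M y z := by
  obtain ⟨M, -, hM⟩ := hA
  refine ⟨M, fun δ T hδ hT hδT y z => ?_⟩
  obtain ⟨u, rfl, rfl, hu⟩ := hM y z
  exact pow_le_transitionProd_of_path hT hδ fun i hi => hδT i _ _ (hu i hi)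

end PathWeight

theorem IsStochastic.mulVec_one {Y : Type*} [Fintype Y] {T : Matrix Y Y ℝ} (hT : IsStochastic T) :
    T *ᵥ 1 = 1 :=
  funext fun y => by simpa [Matrix.mulVec, dotProduct] using hT.2 y

theorem pathWeight_mem_stdSimplex {Y : Type*} [Fintype Y] {p : Y → ℝ} {T : ℕ → Matrix Y Y ℝ}
    (hp : p ∈ stdSimplex ℝ Y) (hT : ∀ n, IsStochastic (T n)) (n : ℕ) :
    pathWeight p T n ∈ stdSimplex ℝ (Fin (n + 1) → Y) := by
  classical
  refine ⟨pathWeight_nonneg hp.1 (fun n => (hT n).1) n, ?_⟩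
  rw [sum_pathWeight, transitionProd_mulVec_one fun n => (hT n).mulVec_one, dotProduct_one, hp.2]

section Substochastic

variable {Y : Type*} [Fintype Y]

/-- A nonnegative matrix whose row sums are at most `1`. -/
def IsSubstochastic (R : Matrix Y Y ℝ) : Prop :=
  (∀ y z, 0 ≤ R y z) ∧ R *ᵥ 1 ≤ 1

/-- The total mass `∑ y, (1 - ∑ z, R y z)` that the rows of `R` lack to be stochastic. -/
def massDeficit (R : Matrix Y Y ℝ) : ℝ := ∑ y, (1 - (R *ᵥ 1) y)

theorem mulVec_mono {R : Matrix Y Y ℝ} (hR : ∀ y z, 0 ≤ R y z) {g h : Y → ℝ} (hgh : g ≤ h) :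
    R *ᵥ g ≤ R *ᵥ h :=
  fun y => dotProduct_le_dotProduct_of_nonneg_left hgh (hR y)

namespace IsSubstochastic

variable {B R : Matrix Y Y ℝ}

theorem mul (hB : IsSubstochastic B) (hR : IsSubstochastic R) : IsSubstochastic (B * R) := by
  refine ⟨fun y z => Finset.sum_nonneg fun x _ => mul_nonneg (hB.1 y x) (hR.1 x z), ?_⟩
  rw [← Matrix.mulVec_mulVec]
  exact (mulVec_mono hB.1 hR.2).trans hB.2

theorem transitionProd [DecidableEq Y] {R : ℕ → Matrix Y Y ℝ} (hR : ∀ n, IsSubstochastic (R n))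
    (n : ℕ) : IsSubstochastic (transitionProd R n) := by
  induction n with
  | zero => exact ⟨transitionProd_nonneg (fun n => (hR n).1) 0, by simp [transitionProd_zero]⟩
  | succ n ih => exact transitionProd_succ R n ▸ ih.mul (hR n)

theorem massDeficit_nonneg (hR : IsSubstochastic R) : 0 ≤ massDeficit R :=
  Finset.sum_nonneg fun y _ => sub_nonneg.2 (hR.2 y)

theorem one_sub_massDeficit_le (hR : IsSubstochastic R) (y : Y) :
    1 - massDeficit R ≤ (R *ᵥ 1) y :=
  sub_le_comm.1 <| Finset.single_le_sum (f := fun y => 1 - (R *ᵥ 1) y)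
    (fun y _ => sub_nonneg.2 (hR.2 y)) (Finset.mem_univ y)

theorem mul_mulVec_one_le (hB : IsSubstochastic B) (hR : IsSubstochastic R) {c : ℝ}
    (hc : ∀ y z, c ≤ B y z) (y : Y) : ((B * R) *ᵥ 1) y ≤ 1 - c * massDeficit R := by
  have hloss : c * massDeficit R ≤ (B *ᵥ (1 - R *ᵥ 1)) y := by
    rw [massDeficit, Finset.mul_sum]
    exact Finset.sum_le_sum fun z _ => mul_le_mul_of_nonneg_right (hc y z) (sub_nonneg.2 (hR.2 z))
  have hmass := hB.2 y
  rw [Matrix.mulVec_sub, Pi.sub_apply] at hloss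
  rw [Pi.one_apply] at hmass
  rw [← Matrix.mulVec_mulVec]
  linarith

theorem one_sub_sum_massDeficit_le [DecidableEq Y] {R : ℕ → Matrix Y Y ℝ}
    (hR : ∀ n, IsSubstochastic (R n)) (n : ℕ) (y : Y) :
    1 - ∑ k ∈ Finset.range n, massDeficit (R k) ≤ (MarkovSFT.transitionProd R n *ᵥ 1) y := by
  induction n with
  | zero => simp [transitionProd_zero]
  | succ n ih =>
    have hstep : (1 - massDeficit (R n)) * (MarkovSFT.transitionProd R n *ᵥ 1) y
        ≤ (MarkovSFT.transitionProd R (n + 1) *ᵥ 1) y := by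
      rw [transitionProd_succ, ← Matrix.mulVec_mulVec, ← smul_eq_mul, ← Pi.smul_apply,
        ← Matrix.mulVec_smul]
      refine mulVec_mono (transitionProd hR n).1 (fun z => ?_) y
      simpa using (hR n).one_sub_massDeficit_le z
    have hmass : (MarkovSFT.transitionProd R n *ᵥ 1) y ≤ 1 := (transitionProd hR n).2 y
    rw [Finset.sum_range_succ]
    nlinarith [(hR n).massDeficit_nonneg]

theorem dotProduct_transitionProd_antitone [DecidableEq Y] {R : ℕ → Matrix Y Y ℝ}
    (hR : ∀ n, IsSubstochastic (R n)) {p : Y → ℝ} (hp : 0 ≤ p) :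
    Antitone fun n => p ⬝ᵥ (MarkovSFT.transitionProd R n *ᵥ 1) := by
  refine antitone_nat_of_succ_le fun n =>
    dotProduct_le_dotProduct_of_nonneg_left ?_ hp
  rw [transitionProd_succ, ← Matrix.mulVec_mulVec]
  exact mulVec_mono (transitionProd hR n).1 (hR n).2

end IsSubstochastic

theorem summable_sub_shift_of_antitone {a : ℕ → ℝ} (ha : Antitone a) {b : ℝ} (hb : ∀ n, b ≤ a n)
    (L : ℕ) : Summable fun n => a n - a (n + L) := by
  have hone : Summable fun n => a n - a (n + 1) :=
    summable_of_sum_range_le (c := a 0 - b) (fun n => sub_nonneg.2 (ha n.le_succ)) fun n => by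
      rw [Finset.sum_range_sub']
      exact sub_le_sub_left (hb n) _
  induction L with
  | zero => simp [summable_zero]
  | succ L ih =>
    simpa [add_assoc] using ih.add ((summable_nat_add_iff L).2 hone)

-- Whatever the state, `M` steps reach every `z` with weight at least `c`, and the next step then
-- loses the deficit of the row `z`; so `c * ε` times the deficit is at most the drop of the total
-- mass over these `M + 1` steps, and the drops telescope.
theorem summable_massDeficit [DecidableEq Y] {R : ℕ → Matrix Y Y ℝ}
    (hR : ∀ n, IsSubstochastic (R n)) {M : ℕ} {c : ℝ} (hc : 0 < c)
    (hM : ∀ n y z, c ≤ transitionProd (fun k => R (n + k)) M y z) {p : Y → ℝ} (hp : 0 ≤ p)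
    {ε : ℝ} (hε : 0 < ε) (hmass : ∀ n, ε ≤ p ⬝ᵥ (transitionProd R n *ᵥ 1)) :
    Summable fun n => massDeficit (R n) := by
  set a : ℕ → ℝ := fun n => p ⬝ᵥ (transitionProd R n *ᵥ 1)
  have hblock (n : ℕ) : a (n + (M + 1)) ≤ (1 - c * massDeficit (R (n + M))) * a n := by
    have hrow : (transitionProd (fun k => R (n + k)) M * R (n + M)) *ᵥ 1
        ≤ (1 - c * massDeficit (R (n + M))) • 1 := fun y => by
      simpa using (IsSubstochastic.transitionProd (fun k => hR (n + k)) M).mul_mulVec_one_le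
        (hR (n + M)) (hM n) y
    calc a (n + (M + 1))
      _ = p ⬝ᵥ (transitionProd R n *ᵥ
            ((transitionProd (fun k => R (n + k)) M * R (n + M)) *ᵥ 1)) := by
        rw [Matrix.mulVec_mulVec, ← transitionProd_succ, ← transitionProd_add]
      _ ≤ p ⬝ᵥ (transitionProd R n *ᵥ ((1 - c * massDeficit (R (n + M))) • 1)) :=
        dotProduct_le_dotProduct_of_nonneg_left
          (mulVec_mono (IsSubstochastic.transitionProd hR n).1 hrow) hp
      _ = (1 - c * massDeficit (R (n + M))) * a n := by
        rw [Matrix.mulVec_smul, dotProduct_smul, smul_eq_mul]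
  have hdrop (n : ℕ) : c * ε * massDeficit (R (n + M)) ≤ a n - a (n + (M + 1)) := by
    have := mul_le_mul_of_nonneg_left (hmass n)
      (mul_nonneg hc.le (hR (n + M)).massDeficit_nonneg)
    linarith [hblock n]
  rw [← summable_nat_add_iff M, ← summable_mul_left_iff (mul_pos hc hε).ne']
  exact (summable_sub_shift_of_antitone (IsSubstochastic.dotProduct_transitionProd_antitone hR hp)
    hmass (M + 1)).of_nonneg_of_le
    (fun n => mul_nonneg (mul_pos hc hε).le (hR (n + M)).massDeficit_nonneg) hdrop

end Substochastic

section Hellinger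

variable {Y : Type*}

/-- The entrywise geometric mean of two matrices. For transition matrices its row sums are the
affinities of corresponding rows. -/
noncomputable def geomMean (T U : Matrix Y Y ℝ) : Matrix Y Y ℝ :=
  .of fun y z => √(T y z * U y z)

theorem geomMean_self {T : Matrix Y Y ℝ} (hT : ∀ y z, 0 ≤ T y z) : geomMean T T = T :=
  Matrix.ext fun y z => Real.sqrt_mul_self (hT y z)

theorem le_geomMean {T U : Matrix Y Y ℝ} {δ : ℝ} (hδ : 0 ≤ δ) {y z : Y} (hT : δ ≤ T y z)
    (hU : δ ≤ U y z) : δ ≤ geomMean T U y z :=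
  Real.le_sqrt_of_sq_le <| sq δ ▸ mul_le_mul hT hU hδ (hδ.trans hT)

theorem sqrt_pathWeight_mul_pathWeight {p q : Y → ℝ} {T U : ℕ → Matrix Y Y ℝ}
    (hp : ∀ y, 0 ≤ p y) (hq : ∀ y, 0 ≤ q y) (hT : ∀ n y z, 0 ≤ T n y z)
    (hU : ∀ n y z, 0 ≤ U n y z) (n : ℕ) (w : Fin (n + 1) → Y) :
    √(pathWeight p T n w * pathWeight q U n w)
      = pathWeight (fun y => √(p y * q y)) (fun k => geomMean (T k) (U k)) n w := by
  rw [pathWeight, pathWeight, mul_mul_mul_comm, ← Finset.prod_mul_distrib,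
    Real.sqrt_mul (mul_nonneg (hp _) (hq _)),
    Real.sqrt_prod _ fun _ _ => mul_nonneg (hT _ _ _) (hU _ _ _)]
  rfl

variable [Fintype Y]

/-- The total squared Hellinger distance between corresponding rows of two matrices. -/
noncomputable def sqHellinger (T U : Matrix Y Y ℝ) : ℝ := ∑ y, ∑ z, (√(T y z) - √(U y z)) ^ 2

theorem sqHellinger_comm (T U : Matrix Y Y ℝ) : sqHellinger T U = sqHellinger U T := by
  simp only [sqHellinger, sub_sq_comm]

theorem geomMean_mulVec_one (T U : Matrix Y Y ℝ) (y : Y) :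
    (geomMean T U *ᵥ 1) y = affinity (T y) (U y) :=
  dotProduct_one _

theorem IsStochastic.row_mem_stdSimplex {T : Matrix Y Y ℝ} (hT : IsStochastic T) (y : Y) :
    T y ∈ stdSimplex ℝ Y :=
  ⟨hT.1 y, hT.2 y⟩

theorem massDeficit_eq_zero {T : Matrix Y Y ℝ} (hT : IsStochastic T) : massDeficit T = 0 := by
  simp [massDeficit, hT.mulVec_one]

theorem isSubstochastic_geomMean {T U : Matrix Y Y ℝ} (hT : IsStochastic T)
    (hU : IsStochastic U) : IsSubstochastic (geomMean T U) :=
  ⟨fun _ _ => Real.sqrt_nonneg _, fun y => by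
    rw [geomMean_mulVec_one]
    exact affinity_le_one (hT.row_mem_stdSimplex y) (hU.row_mem_stdSimplex y)⟩

theorem sqHellinger_eq_two_mul_massDeficit {T U : Matrix Y Y ℝ} (hT : IsStochastic T)
    (hU : IsStochastic U) : sqHellinger T U = 2 * massDeficit (geomMean T U) := by
  rw [sqHellinger, massDeficit, Finset.mul_sum]
  exact Finset.sum_congr rfl fun y _ => by
    rw [sum_sq_sqrt_sub_sqrt (hT.row_mem_stdSimplex y) (hU.row_mem_stdSimplex y),
      geomMean_mulVec_one]

theorem summable_sqHellinger_iff {T U : ℕ → Matrix Y Y ℝ} (hT : ∀ n, IsStochastic (T n))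
    (hU : ∀ n, IsStochastic (U n)) :
    (Summable fun n => sqHellinger (T n) (U n)) ↔
      Summable fun n => massDeficit (geomMean (T n) (U n)) := by
  simp only [sqHellinger_eq_two_mul_massDeficit (hT _) (hU _)]
  exact summable_mul_left_iff two_ne_zero

theorem affinity_pathWeight [DecidableEq Y] {p q : Y → ℝ} {T U : ℕ → Matrix Y Y ℝ}
    (hp : ∀ y, 0 ≤ p y) (hq : ∀ y, 0 ≤ q y) (hT : ∀ n y z, 0 ≤ T n y z)
    (hU : ∀ n y z, 0 ≤ U n y z) (n : ℕ) :
    affinity (pathWeight p T n) (pathWeight q U n)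
      = (fun y => √(p y * q y)) ⬝ᵥ (transitionProd (fun k => geomMean (T k) (U k)) n *ᵥ 1) := by
  rw [← sum_pathWeight]
  exact Finset.sum_congr rfl fun w _ => sqrt_pathWeight_mul_pathWeight hp hq hT hU n w

theorem one_sub_sum_massDeficit_le_affinity_pathWeight {p : Y → ℝ} {T U : ℕ → Matrix Y Y ℝ}
    (hp : p ∈ stdSimplex ℝ Y) (hT : ∀ n, IsStochastic (T n)) (hU : ∀ n, IsStochastic (U n))
    (n : ℕ) :
    1 - ∑ k ∈ Finset.range n, massDeficit (geomMean (T k) (U k))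
      ≤ affinity (pathWeight p T n) (pathWeight p U n) := by
  classical
  set d := ∑ k ∈ Finset.range n, massDeficit (geomMean (T k) (U k))
  have hrow : (1 - d) • 1 ≤ transitionProd (fun k => geomMean (T k) (U k)) n *ᵥ 1 := fun y => by
    simpa [d] using IsSubstochastic.one_sub_sum_massDeficit_le
      (fun k => isSubstochastic_geomMean (hT k) (hU k)) n y
  simp only [affinity_pathWeight hp.1 hp.1 (fun k => (hT k).1) fun k => (hU k).1,
    Real.sqrt_mul_self (hp.1 _)]
  calc 1 - d
    _ = p ⬝ᵥ ((1 - d) • 1) := by rw [dotProduct_smul, dotProduct_one, hp.2, smul_eq_mul, mul_one]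
    _ ≤ p ⬝ᵥ (transitionProd (fun k => geomMean (T k) (U k)) n *ᵥ 1) :=
      dotProduct_le_dotProduct_of_nonneg_left hrow hp.1

end Hellinger

section Splice

variable {Y : Type*}

/-- The inhomogeneous chain that follows `T` before time `m` and `U` from time `m` on. -/
def splice (m : ℕ) (T U : ℕ → Matrix Y Y ℝ) (k : ℕ) : Matrix Y Y ℝ := if k < m then T k else U k

theorem exists_one_le_forall_le_mul {ι : Type*} [Finite ι] {a b : ι → ℝ} (hb : ∀ i, 0 ≤ b i)
    (hab : ∀ i, b i = 0 → a i = 0) : ∃ K, 1 ≤ K ∧ ∀ i, a i ≤ K * b i := by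
  obtain ⟨B, hB⟩ := (Set.finite_range fun i => a i / b i).bddAbove
  refine ⟨max 1 B, le_max_left 1 B, fun i => ?_⟩
  rcases (hb i).eq_or_lt with hi | hi
  · simp [hab i hi.symm, ← hi]
  · exact (div_le_iff₀ hi).1 ((hB (Set.mem_range_self i)).trans (le_max_right 1 B))

theorem pathWeight_le_mul_pathWeight {p q : Y → ℝ} {T U : ℕ → Matrix Y Y ℝ} {K : ℝ} {c : ℕ → ℝ}
    (hp : ∀ y, 0 ≤ p y) (hT : ∀ n y z, 0 ≤ T n y z) (hpq : ∀ y, p y ≤ K * q y)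
    (hTU : ∀ n y z, T n y z ≤ c n * U n y z) (n : ℕ) (w : Fin (n + 1) → Y) :
    pathWeight p T n w ≤ (K * ∏ i ∈ Finset.range n, c i) * pathWeight q U n w :=
  calc pathWeight p T n w
    _ ≤ K * q (w 0) * ∏ i : Fin n, c i * U i (w i.castSucc) (w i.succ) :=
      mul_le_mul (hpq _) (Finset.prod_le_prod (fun _ _ => hT _ _ _) fun _ _ => hTU _ _ _)
        (Finset.prod_nonneg fun _ _ => hT _ _ _) ((hp _).trans (hpq _))
    _ = (K * ∏ i ∈ Finset.range n, c i) * pathWeight q U n w := by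
      rw [Finset.prod_mul_distrib, Fin.prod_univ_eq_prod_range, pathWeight, mul_mul_mul_comm]

theorem exists_pathWeight_splice_le [Finite Y] {p q : Y → ℝ} {T U : ℕ → Matrix Y Y ℝ}
    (hp : ∀ y, 0 ≤ p y) (hq : ∀ y, 0 ≤ q y) (hpq : ∀ y, q y = 0 → p y = 0)
    (hT : ∀ n y z, 0 ≤ T n y z) (hU : ∀ n y z, 0 ≤ U n y z)
    (hTU : ∀ n y z, U n y z = 0 → T n y z = 0) (m : ℕ) :
    ∃ C, 0 ≤ C ∧ ∀ n w, pathWeight p (splice m T U) n w ≤ C * pathWeight q U n w := by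
  obtain ⟨K, hK, hKpq⟩ := exists_one_le_forall_le_mul hq hpq
  obtain ⟨L, hL, hLTU⟩ := exists_one_le_forall_le_mul
    (a := fun i : Fin m × Y × Y => T i.1 i.2.1 i.2.2) (b := fun i => U i.1 i.2.1 i.2.2)
    (fun _ => hU _ _ _) (fun _ => hTU _ _ _)
  have hsplice (n : ℕ) (y z : Y) :
      splice m T U n y z ≤ (if n < m then L else 1) * U n y z := by
    unfold splice
    split_ifs with hn
    · exact hLTU (⟨n, hn⟩, y, z)
    · exact (one_mul _).ge
  have hnonneg (n : ℕ) (y z : Y) : 0 ≤ splice m T U n y z := by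
    unfold splice
    split_ifs
    exacts [hT n y z, hU n y z]
  have hprod (n : ℕ) : ∏ i ∈ Finset.range n, (if i < m then L else 1) ≤ L ^ m := by
    rw [Finset.prod_ite, Finset.prod_const, Finset.prod_const_one, mul_one]
    refine pow_le_pow_right₀ hL ?_
    simpa using Finset.card_le_card (t := Finset.range m)
      (fun i hi => Finset.mem_range.2 (Finset.mem_filter.1 hi).2)
  refine ⟨K * L ^ m, by positivity, fun n w =>
    (pathWeight_le_mul_pathWeight hp hnonneg hKpq hsplice n w).trans ?_⟩
  gcongr
  · exact pathWeight_nonneg hq hU n w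
  · exact hprod n

variable [Fintype Y]

theorem isStochastic_splice {T U : ℕ → Matrix Y Y ℝ} (hT : ∀ n, IsStochastic (T n))
    (hU : ∀ n, IsStochastic (U n)) (m n : ℕ) : IsStochastic (splice m T U n) := by
  unfold splice
  split_ifs
  exacts [hT n, hU n]

theorem sum_massDeficit_geomMean_splice_le {T U : ℕ → Matrix Y Y ℝ}
    (hT : ∀ n, IsStochastic (T n)) (hU : ∀ n, IsStochastic (U n))
    (hTU : Summable fun n => massDeficit (geomMean (T n) (U n))) (m n : ℕ) :
    ∑ k ∈ Finset.range n, massDeficit (geomMean (T k) (splice m T U k))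
      ≤ ∑' k, massDeficit (geomMean (T (k + m)) (U (k + m))) := by
  have hnonneg (k : ℕ) : 0 ≤ massDeficit (geomMean (T k) (splice m T U k)) :=
    (isSubstochastic_geomMean (hT k) (isStochastic_splice hT hU m k)).massDeficit_nonneg
  have hhead : ∀ k ∈ Finset.range m, massDeficit (geomMean (T k) (splice m T U k)) = 0 := by
    intro k hk
    rw [splice, if_pos (Finset.mem_range.1 hk), geomMean_self (hT k).1,
      massDeficit_eq_zero (hT k)]
  calc ∑ k ∈ Finset.range n, massDeficit (geomMean (T k) (splice m T U k))
    _ ≤ ∑ k ∈ Finset.range (m + n), massDeficit (geomMean (T k) (splice m T U k)) :=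
      Finset.sum_le_sum_of_subset_of_nonneg (Finset.range_mono (Nat.le_add_left n m))
        fun k _ _ => hnonneg k
    _ = ∑ k ∈ Finset.range n, massDeficit (geomMean (T (k + m)) (U (k + m))) := by
      rw [Finset.sum_range_add, Finset.sum_eq_zero hhead, zero_add]
      simp only [splice, add_comm m, Nat.not_lt.2 (Nat.le_add_left _ _), if_false]
    _ ≤ ∑' k, massDeficit (geomMean (T (k + m)) (U (k + m))) :=
      ((summable_nat_add_iff m).2 hTU).sum_le_tsum _ fun k _ =>
        (isSubstochastic_geomMean (hT _) (hU _)).massDeficit_nonneg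

-- The chain spliced late enough is uniformly close in Hellinger distance to the first chain, and
-- its path weights are dominated by those of the second one.
theorem exists_sum_pathWeight_le {p q : Y → ℝ} {T U : ℕ → Matrix Y Y ℝ}
    (hp : p ∈ stdSimplex ℝ Y) (hq : ∀ y, 0 ≤ q y) (hpq : ∀ y, q y = 0 → p y = 0)
    (hT : ∀ n, IsStochastic (T n)) (hU : ∀ n, IsStochastic (U n))
    (hTU : ∀ n y z, U n y z = 0 → T n y z = 0)
    (hsum : Summable fun n => massDeficit (geomMean (T n) (U n))) {ε : ℝ} (hε : 0 < ε) :
    ∃ C, 0 ≤ C ∧ ∀ (n : ℕ) (s : Finset (Fin (n + 1) → Y)),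
      ∑ w ∈ s, pathWeight p T n w ≤ C * ∑ w ∈ s, pathWeight q U n w + ε := by
  obtain ⟨m, hm⟩ := ((tendsto_sum_nat_add fun n => massDeficit (geomMean (T n) (U n))).eventually_lt
    tendsto_const_nhds (by positivity : 0 < ε / 4)).exists
  obtain ⟨C, hC, hdom⟩ :=
    exists_pathWeight_splice_le hp.1 hq hpq (fun n => (hT n).1) (fun n => (hU n).1) hTU m
  have hV := isStochastic_splice hT hU m
  refine ⟨2 * C, by positivity, fun n s => ?_⟩
  have haff : 1 - affinity (pathWeight p T n) (pathWeight p (splice m T U) n) ≤ ε / 4 := by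
    linarith [one_sub_sum_massDeficit_le_affinity_pathWeight hp hT hV n,
      sum_massDeficit_geomMean_splice_le hT hU hsum m n]
  calc ∑ w ∈ s, pathWeight p T n w
    _ ≤ 2 * ∑ w ∈ s, pathWeight p (splice m T U) n w
          + 4 * (1 - affinity (pathWeight p T n) (pathWeight p (splice m T U) n)) :=
      sum_le_two_mul_sum_add (pathWeight_mem_stdSimplex hp hT n)
        (pathWeight_mem_stdSimplex hp hV n) s
    _ ≤ 2 * ∑ w ∈ s, C * pathWeight q U n w + 4 * (ε / 4) := by
      gcongr with w
      exact hdom n w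
    _ = 2 * C * ∑ w ∈ s, pathWeight q U n w + ε := by
      rw [← Finset.mul_sum]
      ring

end Splice

section AbsoluteContinuity

variable {Ω : Type*} [MeasurableSpace Ω] {ν μ : Measure Ω}

theorem exists_measureReal_lt_of_absolutelyContinuous [IsFiniteMeasure ν] [IsFiniteMeasure μ]
    (h : ν ≪ μ) {ε : ℝ} (hε : 0 < ε) : ∃ η, 0 < η ∧ ∀ s, μ.real s < η → ν.real s < ε := by
  obtain ⟨η, hη, hηε⟩ := exists_pos_setLIntegral_lt_of_measure_lt (μ := μ) (f := ν.rnDeriv μ)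
    (by simp [Measure.lintegral_rnDeriv h]) (ENNReal.ofReal_pos.2 hε).ne'
  obtain ⟨η', -, hlt⟩ := ENNReal.lt_iff_exists_real_btwn.1 hη
  refine ⟨η', ENNReal.ofReal_pos.1 hlt.1, fun s hs => ?_⟩
  have hμs : μ s < η := by
    refine lt_trans ?_ hlt.2
    rwa [← ofReal_measureReal, ENNReal.ofReal_lt_ofReal_iff (ENNReal.ofReal_pos.1 hlt.1)]
  have hνs := hηε s hμs
  rwa [Measure.setLIntegral_rnDeriv h, ← ofReal_measureReal,
    ENNReal.ofReal_lt_ofReal_iff hε] at hνs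

-- On the event `μ{X = i} ≤ ν{X = i}` the measure `μ` is at most the affinity, and so is `ν` on the
-- complementary event; a small affinity would make `ν` small on both.
theorem exists_pos_le_affinity_of_absolutelyContinuous [IsProbabilityMeasure ν]
    [IsFiniteMeasure μ] (h : ν ≪ μ) :
    ∃ ε, 0 < ε ∧ ∀ {ι : Type*} [Fintype ι] (X : Ω → ι), (∀ i, MeasurableSet (X ⁻¹' {i})) →
      ε ≤ affinity (fun i => ν.real (X ⁻¹' {i})) fun i => μ.real (X ⁻¹' {i}) := by
  classical
  obtain ⟨η, hη, hsmall⟩ := exists_measureReal_lt_of_absolutelyContinuous h one_half_pos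
  refine ⟨min η (1 / 2), by positivity, fun {ι} _ X hX => ?_⟩
  set a : ι → ℝ := fun i => ν.real (X ⁻¹' {i})
  set b : ι → ℝ := fun i => μ.real (X ⁻¹' {i})
  by_contra! hlt
  obtain ⟨hlt_η, hlt_half⟩ := lt_min_iff.1 hlt
  have hν : ∑ i with b i ≤ a i, a i < 1 / 2 := by
    rw [sum_measureReal_preimage_singleton _ fun i _ => hX i]
    refine hsmall _ (lt_of_le_of_lt ?_ hlt_η)
    rw [← sum_measureReal_preimage_singleton _ fun i _ => hX i]
    exact sum_filter_le_affinity fun i => measureReal_nonneg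
  have hνc : ∑ i with ¬ b i ≤ a i, a i < 1 / 2 := by
    calc ∑ i with ¬ b i ≤ a i, a i
      _ ≤ ∑ i with a i ≤ b i, a i :=
        Finset.sum_le_sum_of_subset_of_nonneg
          (Finset.monotone_filter_right _ fun i _ hi => (not_le.1 hi).le)
          fun i _ _ => measureReal_nonneg
      _ ≤ affinity b a := sum_filter_le_affinity fun i => measureReal_nonneg
      _ < 1 / 2 := affinity_comm a b ▸ hlt_half
  have hone : ∑ i, a i = 1 := by
    rw [sum_measureReal_preimage_singleton _ fun i _ => hX i]
    simp
  linarith [Finset.sum_filter_add_sum_filter_not Finset.univ (fun i => b i ≤ a i) a]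

theorem absolutelyContinuous_of_forall_measureReal_le [IsFiniteMeasure ν] [IsFiniteMeasure μ]
    {𝒜 : Set (Set Ω)} (h𝒜 : (ν + μ).MeasureDense 𝒜)
    (h : ∀ ε : ℝ, 0 < ε → ∃ C, 0 ≤ C ∧ ∀ t ∈ 𝒜, ν.real t ≤ C * μ.real t + ε) : ν ≪ μ := by
  refine Measure.AbsolutelyContinuous.mk fun s hs hμs => (measureReal_eq_zero_iff).1 <|
    le_antisymm (le_of_forall_pos_le_add fun ε hε => ?_) measureReal_nonneg
  obtain ⟨C, hC, hbound⟩ := h (ε / 2) (by positivity)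
  have hη : 0 < ε / (2 * (C + 1)) := by positivity
  obtain ⟨t, ht, hst⟩ := h𝒜.approx s hs (by finiteness) _ hη
  have hdiff : (ν + μ).real (symmDiff s t) ≤ ε / (2 * (C + 1)) :=
    ENNReal.toReal_le_of_le_ofReal hη.le hst.le
  rw [measureReal_add_apply] at hdiff
  have hclose (ρ : Measure Ω) [IsFiniteMeasure ρ] :
      |ρ.real s - ρ.real t| ≤ ρ.real (symmDiff s t) :=
    abs_measureReal_sub_le_measureReal_symmDiff hs.nullMeasurableSet
      (h𝒜.measurable t ht).nullMeasurableSet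
  have hν := (abs_le.1 (hclose ν)).2
  have hμ : μ.real t ≤ μ.real (symmDiff s t) := by
    have hμs_real : μ.real s = 0 := by simp [measureReal_def, hμs]
    linarith [(abs_le.1 (hclose μ)).1]
  calc ν.real s
    _ ≤ C * μ.real t + ε / 2 + ν.real (symmDiff s t) := by linarith [hbound t ht]
    _ ≤ C * μ.real (symmDiff s t) + ε / 2 + ν.real (symmDiff s t) := by gcongr C * ?_ + _ + _
    _ ≤ (C + 1) * (ν.real (symmDiff s t) + μ.real (symmDiff s t)) + ε / 2 := by
      linarith [mul_nonneg hC (measureReal_nonneg (μ := ν) (s := symmDiff s t)),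
        measureReal_nonneg (μ := μ) (s := symmDiff s t)]
    _ ≤ (C + 1) * (ε / (2 * (C + 1))) + ε / 2 := by gcongr
    _ = 0 + ε := by field_simp; ring

theorem absolutelyContinuous_map_iff_of_leftInverse {Ω' : Type*} [MeasurableSpace Ω']
    {f : Ω → Ω'} {g : Ω' → Ω} (hf : Measurable f) (hg : Measurable g)
    (hgf : Function.LeftInverse g f) : ν.map f ≪ μ.map f ↔ ν ≪ μ := by
  refine ⟨fun h => ?_, fun h => h.map hf⟩
  simpa only [Measure.map_map hg hf, hgf.comp_eq_id, Measure.map_id] using h.map hg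

end AbsoluteContinuity

section ChainLaw

variable {Y : Type*}

/-- The word `x₀ … xₙ` formed by the first `n + 1` letters of a sequence. -/
def initialWord (n : ℕ) (x : ℕ → Y) : Fin (n + 1) → Y := fun i => x i

theorem pathWeight_initialWord (p : Y → ℝ) (T : ℕ → Matrix Y Y ℝ) (n : ℕ) (x : ℕ → Y) :
    pathWeight p T n (initialWord n x)
      = p (x 0) * ∏ i ∈ Finset.range n, T i (x i) (x (i + 1)) := by
  rw [← Fin.prod_univ_eq_prod_range fun i => T i (x i) (x (i + 1))]
  rfl

variable [MeasurableSpace Y]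

theorem measurable_initialWord (n : ℕ) : Measurable (initialWord (Y := Y) n) := by
  unfold initialWord
  fun_prop

theorem exists_eq_preimage_initialWord {t : Set (ℕ → Y)}
    (ht : t ∈ measurableCylinders fun _ : ℕ => Y) :
    ∃ (n : ℕ) (s : Set (Fin (n + 1) → Y)), t = initialWord n ⁻¹' s := by
  rw [measurableCylinders_nat] at ht
  simp only [Set.mem_iUnion, Set.mem_singleton_iff] at ht
  obtain ⟨n, s, -, rfl⟩ := ht
  exact ⟨n, {w | (fun i : Finset.Iic n => w ⟨i, Nat.lt_succ_of_le (Finset.mem_Iic.1 i.2)⟩) ∈ s},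
    rfl⟩

variable [Fintype Y]

/-- `ν` is the law on `ℕ → Y` of the inhomogeneous Markov chain with initial distribution `p` and
transition matrices `T 0, T 1, …`. -/
structure IsChainLaw (ν : Measure (ℕ → Y)) (p : Y → ℝ) (T : ℕ → Matrix Y Y ℝ) : Prop where
  isProbabilityMeasure : IsProbabilityMeasure ν
  initial_mem : p ∈ stdSimplex ℝ Y
  isStochastic : ∀ n, IsStochastic (T n)
  measureReal_initialWord : ∀ n w, ν.real (initialWord n ⁻¹' {w}) = pathWeight p T n w

namespace IsChainLaw

variable [MeasurableSingletonClass Y] {ν μ : Measure (ℕ → Y)} {p q : Y → ℝ}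
  {T U : ℕ → Matrix Y Y ℝ}

theorem measureReal_preimage_initialWord (hν : IsChainLaw ν p T) (n : ℕ)
    (s : Finset (Fin (n + 1) → Y)) :
    ν.real (initialWord n ⁻¹' s) = ∑ w ∈ s, pathWeight p T n w := by
  have := hν.isProbabilityMeasure
  rw [← sum_measureReal_preimage_singleton s fun w _ =>
    measurable_initialWord n (measurableSet_singleton w)]
  exact Finset.sum_congr rfl fun w _ => hν.measureReal_initialWord n w

theorem summable_sqHellinger_of_absolutelyContinuous [DecidableEq Y] (hν : IsChainLaw ν p T)
    (hμ : IsChainLaw μ q U) {M : ℕ} {c : ℝ} (hc : 0 < c)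
    (hM : ∀ n y z, c ≤ transitionProd (fun k => geomMean (T (n + k)) (U (n + k))) M y z)
    (h : ν ≪ μ) : Summable fun n => sqHellinger (T n) (U n) := by
  have := hν.isProbabilityMeasure
  have := hμ.isProbabilityMeasure
  obtain ⟨ε, hε, haff⟩ := exists_pos_le_affinity_of_absolutelyContinuous h
  rw [summable_sqHellinger_iff hν.isStochastic hμ.isStochastic]
  refine summable_massDeficit
    (fun n => isSubstochastic_geomMean (hν.isStochastic n) (hμ.isStochastic n)) hc hM
    (p := fun y => √(p y * q y)) (fun y => Real.sqrt_nonneg _) hε fun n => ?_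
  rw [← affinity_pathWeight hν.initial_mem.1 hμ.initial_mem.1 (fun n => (hν.isStochastic n).1)
    fun n => (hμ.isStochastic n).1]
  simpa only [hν.measureReal_initialWord, hμ.measureReal_initialWord] using
    haff (initialWord n) fun w => measurable_initialWord n (measurableSet_singleton w)

theorem absolutelyContinuous_of_summable_sqHellinger (hν : IsChainLaw ν p T)
    (hμ : IsChainLaw μ q U) (hpq : ∀ y, q y = 0 → p y = 0)
    (hTU : ∀ n y z, U n y z = 0 → T n y z = 0)
    (hsum : Summable fun n => sqHellinger (T n) (U n)) : ν ≪ μ := by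
  have := hν.isProbabilityMeasure
  have := hμ.isProbabilityMeasure
  rw [summable_sqHellinger_iff hν.isStochastic hμ.isStochastic] at hsum
  refine absolutelyContinuous_of_forall_measureReal_le
    (Measure.MeasureDense.of_generateFrom_isSetAlgebra_finite _ isSetAlgebra_measurableCylinders
      generateFrom_measurableCylinders.symm) fun ε hε => ?_
  obtain ⟨C, hC, hbound⟩ := exists_sum_pathWeight_le hν.initial_mem hμ.initial_mem.1 hpq
    hν.isStochastic hμ.isStochastic hTU hsum hε
  refine ⟨C, hC, fun t ht => ?_⟩
  obtain ⟨n, s, rfl⟩ := exists_eq_preimage_initialWord ht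
  lift s to Finset (Fin (n + 1) → Y) using s.toFinite
  rw [hν.measureReal_preimage_initialWord, hμ.measureReal_preimage_initialWord]
  exact hbound n s

end IsChainLaw

end ChainLaw

section MarkovMeasure

namespace IsMarkovMeasure

variable {S : Type*} [Fintype S] [MeasurableSpace S] {A : S → S → Bool} {P : ℤ → S → S → ℝ}
  {π : ℤ → S → ℝ} {ν : Measure (Seq S)}

theorem dist_mem_stdSimplex (hν : IsMarkovMeasure ν A P π) (n : ℤ) : π n ∈ stdSimplex ℝ S :=
  ⟨hν.dist_nonneg n, hν.dist_sum n⟩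

theorem dist_vecMul_transitionProd [DecidableEq S] (hν : IsMarkovMeasure ν A P π) (n : ℤ)
    (k : ℕ) : π n ᵥ* transitionProd (fun i => .of (P (n + i))) k = π (n + k) := by
  induction k with
  | zero => simp [transitionProd_zero]
  | succ k ih =>
    rw [transitionProd_succ, ← Matrix.vecMul_vecMul, ih, Nat.cast_succ, ← add_assoc]
    exact funext (hν.consistent (n + k))

theorem exists_pos_le_dist (hν : IsMarkovMeasure ν A P π) (hA : IsPrimitive A)
    (hP : Doeblin A P) : ∃ c, 0 < c ∧ ∀ n s, c ≤ π n s := by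
  classical
  obtain ⟨M, hM⟩ := hA.exists_pow_le_transitionProd
  obtain ⟨δ, hδ, hδP⟩ := hP
  refine ⟨δ ^ M, by positivity, fun n t => ?_⟩
  set B := transitionProd (fun i => .of (P (n - M + i))) M
  have hB (s : S) : δ ^ M ≤ B s t :=
    hM δ _ hδ.le (fun k => (hν.stochastic _).1) (fun k s t => (hδP _ s t).2) s t
  calc δ ^ M
    _ = ∑ s, π (n - M) s * δ ^ M := by rw [← Finset.sum_mul, hν.dist_sum, one_mul]
    _ ≤ ∑ s, π (n - M) s * B s t :=
      Finset.sum_le_sum fun s _ => mul_le_mul_of_nonneg_left (hB s) (hν.dist_nonneg _ s)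
    _ = (π (n - M) ᵥ* B) t := rfl
    _ = π n t := by rw [hν.dist_vecMul_transitionProd, sub_add_cancel]

theorem reverseP_nonneg (hν : IsMarkovMeasure ν A P π) (n : ℤ) (s t : S) :
    0 ≤ reverseP P π n s t := by
  unfold reverseP
  split_ifs
  · exact div_nonneg (mul_nonneg (hν.dist_nonneg _ _) ((hν.stochastic _).1 _ _))
      (hν.dist_nonneg _ _)
  · exact le_rfl

theorem dist_mul_reverseP (hν : IsMarkovMeasure ν A P π) (n : ℤ) (s t : S) :
    π n s * reverseP P π n s t = π (n - 1) t * P (n - 1) t s := by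
  rcases (hν.dist_nonneg n s).eq_or_lt with hs | hs
  · have hsum : ∑ t, π (n - 1) t * P (n - 1) t s = 0 := by
      rw [hν.consistent, sub_add_cancel, hs]
    rw [← hs, zero_mul, (Finset.sum_eq_zero_iff_of_nonneg fun t _ =>
      mul_nonneg (hν.dist_nonneg _ t) ((hν.stochastic _).1 t s)).1 hsum t (Finset.mem_univ t)]
  · rw [reverseP, if_pos hs, mul_div_cancel₀ _ hs.ne']

theorem isStochastic_reverseP (hν : IsMarkovMeasure ν A P π) {n : ℤ} (hπ : ∀ s, 0 < π n s) :
    IsStochastic (reverseP P π n) := by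
  refine ⟨hν.reverseP_nonneg n, fun s => ?_⟩
  simp only [reverseP, if_pos (hπ s)]
  rw [← Finset.sum_div, hν.consistent, sub_add_cancel, div_self (hπ s).ne']

theorem dist_mul_prod_eq_mul_prod_reverseP (hν : IsMarkovMeasure ν A P π) (n : ℕ) (x : Seq S) :
    π (-n) (x (-n)) * ∏ i ∈ Finset.range n, P (-i - 1) (x (-i - 1)) (x (-i))
      = π 0 (x 0) * ∏ i ∈ Finset.range n, reverseP P π (-i) (x (-i)) (x (-i - 1)) := by
  induction n with
  | zero => simp
  | succ n ih =>
    rw [Finset.prod_range_succ, Finset.prod_range_succ, ← mul_assoc (π 0 (x 0)), ← ih,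
      Nat.cast_succ, neg_add', mul_right_comm, hν.dist_mul_reverseP]
    ring

theorem measureReal_setOf_eqOn_Icc (hν : IsMarkovMeasure ν A P π) (x : Seq S) (k : ℤ) (m : ℕ) :
    ν.real {y | Set.EqOn y x (Set.Icc k (k + m))}
      = π k (x k) * ∏ i ∈ Finset.range m, P (k + i) (x (k + i)) (x (k + (i + 1))) := by
  have hset : {y | Set.EqOn y x (Set.Icc k (k + m))}
      = {y : Seq S | ∀ i : Fin (m + 1), y (k - 1 + 1 + (i : ℕ)) = x (k + (i : ℕ))} := by
    ext y
    rw [Set.mem_ofPred, Set.mem_ofPred, sub_add_cancel]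
    refine ⟨fun h i => h ⟨by omega, by omega⟩, fun h j hj => ?_⟩
    obtain ⟨i, rfl⟩ := Int.le.dest hj.1
    exact h ⟨i, by have := hj.2; omega⟩
  rw [measureReal_def, hset, hν.cylinder (k - 1) m fun i => x (k + (i : ℕ)),
    ENNReal.toReal_ofReal (mul_nonneg (hν.dist_nonneg _ _)
      (Finset.prod_nonneg fun _ _ => (hν.stochastic _).1 _ _)), sub_add_cancel, Finset.prod_range]
  simp

end IsMarkovMeasure

end MarkovMeasure

section PairChain

variable {S : Type*}

/-- The two-sided sequence `x` folded at time `0` into the one-sided sequence `(x₋ₙ, xₙ)`. -/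
def pairPath (x : Seq S) (n : ℕ) : S × S := (x (-n), x n)

/-- The left inverse of `pairPath`; the entry at time `0` is read off the second coordinate. -/
def unpairPath (y : ℕ → S × S) (k : ℤ) : S := if 0 ≤ k then (y k.natAbs).2 else (y k.natAbs).1

/-- The initial distribution of the pair chain `(x₋ₙ, xₙ)`: the distribution `π 0`, carried by the
diagonal. -/
noncomputable def pairInit (π : ℤ → S → ℝ) : S × S → ℝ :=
  (Set.diagonal S).indicator fun y => π 0 y.1

/-- The transition matrices of the pair chain `(x₋ₙ, xₙ)`: the first coordinate moves backward in
time and the second one forward, independently. -/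
noncomputable def pairTransition (P : ℤ → S → S → ℝ) (π : ℤ → S → ℝ) (n : ℕ) :
    Matrix (S × S) (S × S) ℝ :=
  .of fun y z => reverseP P π (-n) y.1 z.1 * P n y.2 z.2

/-- The adjacency matrix of the pair chain: the first coordinate follows `A` backward. -/
def pairAdj (A : S → S → Bool) (y z : S × S) : Bool := A z.1 y.1 && A y.2 z.2

theorem IsPrimitive.pairAdj {A : S → S → Bool} (hA : IsPrimitive A) : IsPrimitive (pairAdj A) := by
  obtain ⟨M, hM_pos, hM⟩ := hA
  refine ⟨M, hM_pos, fun y z => ?_⟩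
  obtain ⟨u, hu_zero, hu_last, hu⟩ := hM z.1 y.1
  obtain ⟨v, hv_zero, hv_last, hv⟩ := hM y.2 z.2
  refine ⟨fun i => (u (M - i), v i), by simp [hu_last, hv_zero], by simp [hu_zero, hv_last],
    fun i hi => ?_⟩
  have hback := hu (M - (i + 1)) (by omega)
  rw [show M - (i + 1) + 1 = M - i by omega] at hback
  simp [MarkovSFT.pairAdj, hback, hv i hi]

theorem unpairPath_pairPath : Function.LeftInverse (unpairPath (S := S)) pairPath := by
  refine fun x => funext fun k => ?_
  unfold unpairPath pairPath
  split_ifs with hk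
  · simp [abs_of_nonneg hk]
  · simp [abs_of_neg (not_le.1 hk)]

theorem pairPath_unpairPath {y : ℕ → S × S} (hy : y 0 ∈ Set.diagonal S) :
    pairPath (unpairPath y) = y := by
  refine funext fun n => Prod.ext ?_ (by simp [pairPath, unpairPath])
  rcases n.eq_zero_or_pos with rfl | hn
  · simpa [pairPath, unpairPath] using hy.symm
  · simp [pairPath, unpairPath, hn.ne']

theorem preimage_initialWord_comp_pairPath (n : ℕ) (x : Seq S) :
    pairPath ⁻¹' (initialWord n ⁻¹' {initialWord n (pairPath x)})
      = {y | Set.EqOn y x (Set.Icc (-n) (-n + (n + n : ℕ)))} := by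
  ext y
  refine ⟨fun h k hk => ?_, fun h => funext fun i => ?_⟩
  · have hpair := congrFun h ⟨k.natAbs, by have := hk.1; have := hk.2; omega⟩
    obtain ⟨hback, hforth⟩ := Prod.ext_iff.1 hpair
    rcases Int.natAbs_eq k with hk | hk
    · rw [hk]; exact hforth
    · rw [hk]; exact hback
  · exact Prod.ext (h ⟨by omega, by omega⟩) (h ⟨by omega, by omega⟩)

theorem exists_initialWord_pairPath_eq {n : ℕ} {w : Fin (n + 1) → S × S}
    (hw : w 0 ∈ Set.diagonal S) : ∃ x : Seq S, initialWord n (pairPath x) = w := by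
  refine ⟨unpairPath fun k => w (Fin.ofNat (n + 1) k), ?_⟩
  rw [pairPath_unpairPath (by simpa using hw)]
  exact funext fun i => by simp [initialWord]

theorem preimage_initialWord_comp_pairPath_eq_empty {n : ℕ} {w : Fin (n + 1) → S × S}
    (hw : w 0 ∉ Set.diagonal S) : pairPath ⁻¹' (initialWord n ⁻¹' {w}) = ∅ := by
  refine Set.eq_empty_of_forall_notMem fun x hx => hw ?_
  rw [← Set.mem_singleton_iff.1 hx]
  simp [initialWord, pairPath]

theorem sqHellinger_pairTransition [Fintype S] (P Q : ℤ → S → S → ℝ) (π lam : ℤ → S → ℝ) (n : ℕ) :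
    sqHellinger (pairTransition P π n) (pairTransition Q lam n)
      = ∑ s, ∑ u, ∑ v, ∑ t,
        (√(reverseP P π (-n) u s * P n v t) - √(reverseP Q lam (-n) u s * Q n v t)) ^ 2 := by
  simp only [sqHellinger, Fintype.sum_prod_type]
  exact (Finset.sum_congr rfl fun u _ => Finset.sum_comm).trans Finset.sum_comm

variable [MeasurableSpace S]

theorem measurable_pairPath : Measurable (pairPath (S := S)) := by
  unfold pairPath
  fun_prop

theorem measurable_unpairPath : Measurable (unpairPath (S := S)) := by
  refine measurable_pi_iff.2 fun k => ?_
  unfold unpairPath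
  split_ifs <;> fun_prop

namespace IsMarkovMeasure

variable [Fintype S] {A : S → S → Bool} {P Q : ℤ → S → S → ℝ} {π lam : ℤ → S → ℝ}
  {ν μ : Measure (Seq S)}

theorem pairInit_mem_stdSimplex (hν : IsMarkovMeasure ν A P π) :
    pairInit π ∈ stdSimplex ℝ (S × S) := by
  classical
  refine ⟨fun y => Set.indicator_nonneg (fun y _ => hν.dist_nonneg 0 y.1) y, ?_⟩
  simp [pairInit, Fintype.sum_prod_type, Set.indicator_apply, hν.dist_sum 0]

theorem isStochastic_pairTransition (hν : IsMarkovMeasure ν A P π) (hπ : ∀ n s, 0 < π n s)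
    (n : ℕ) : IsStochastic (pairTransition P π n) := by
  refine ⟨fun y z => mul_nonneg (hν.reverseP_nonneg _ _ _) ((hν.stochastic _).1 _ _),
    fun y => ?_⟩
  simp only [pairTransition, Matrix.of_apply, Fintype.sum_prod_type, ← Finset.mul_sum,
    (hν.stochastic _).2, mul_one]
  exact (hν.isStochastic_reverseP (hπ _)).2 y.1

theorem pairTransition_eq_zero (hν : IsMarkovMeasure ν A P π) (n : ℕ) {y z : S × S}
    (hyz : pairAdj A y z = false) : pairTransition P π n y z = 0 := by
  rcases Bool.and_eq_false_iff.1 hyz with h | h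
  · simp [pairTransition, reverseP, hν.compat _ _ _ h]
  · simp [pairTransition, hν.compat _ _ _ h]

theorem exists_pos_le_pairTransition (hν : IsMarkovMeasure ν A P π) (hA : IsPrimitive A)
    (hP : Doeblin A P) :
    ∃ δ, 0 < δ ∧ ∀ n y z, pairAdj A y z = true → δ ≤ pairTransition P π n y z := by
  obtain ⟨c, hc, hcπ⟩ := hν.exists_pos_le_dist hA hP
  obtain ⟨δ, hδ, hδP⟩ := hP
  refine ⟨c * δ * δ, by positivity, fun n y z hyz => ?_⟩
  obtain ⟨hback, hforth⟩ := Bool.and_eq_true_iff.1 hyz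
  have hreverse : c * δ ≤ reverseP P π (-n) y.1 z.1 :=
    calc c * δ
      _ ≤ π (-n - 1) z.1 * P (-n - 1) z.1 y.1 :=
        mul_le_mul (hcπ _ _) ((hδP _ _ _).2 hback) hδ.le (hν.dist_nonneg _ _)
      _ = π (-n) y.1 * reverseP P π (-n) y.1 z.1 := (hν.dist_mul_reverseP _ _ _).symm
      _ ≤ reverseP P π (-n) y.1 z.1 :=
        mul_le_of_le_one_left (hν.reverseP_nonneg _ _ _)
          (mem_Icc_of_mem_stdSimplex (hν.dist_mem_stdSimplex _) _).2
  exact mul_le_mul hreverse ((hδP _ _ _).2 hforth) hδ.le (hν.reverseP_nonneg _ _ _)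

theorem pathWeight_initialWord_pairPath (hν : IsMarkovMeasure ν A P π) (n : ℕ) (x : Seq S) :
    pathWeight (pairInit π) (pairTransition P π) n (initialWord n (pairPath x))
      = ν.real {y | Set.EqOn y x (Set.Icc (-n) (-n + (n + n : ℕ)))} := by
  have hbackward : ∏ i ∈ Finset.range n, P (-n + i) (x (-n + i)) (x (-n + (i + 1)))
      = ∏ i ∈ Finset.range n, P (-i - 1) (x (-i - 1)) (x (-i)) := by
    rw [← Finset.prod_range_reflect]
    refine Finset.prod_congr rfl fun i hi => ?_
    have hi := Finset.mem_range.1 hi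
    have hstart : (-n + (n - 1 - i : ℕ) : ℤ) = -i - 1 := by omega
    have hend : (-n + ((n - 1 - i : ℕ) + 1) : ℤ) = -i := by omega
    rw [hstart, hend]
  have hforward : ∏ i ∈ Finset.range n,
        P (-n + (n + i : ℕ)) (x (-n + (n + i : ℕ))) (x (-n + ((n + i : ℕ) + 1)))
      = ∏ i ∈ Finset.range n, P i (x i) (x (i + 1)) := by
    refine Finset.prod_congr rfl fun i _ => ?_
    rw [Nat.cast_add, add_assoc, neg_add_cancel_left, neg_add_cancel_left]
  rw [hν.measureReal_setOf_eqOn_Icc, Finset.prod_range_add, hbackward, hforward, ← mul_assoc,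
    hν.dist_mul_prod_eq_mul_prod_reverseP, pathWeight_initialWord, mul_assoc,
    ← Finset.prod_mul_distrib]
  simp [pairInit, pairPath, pairTransition, sub_eq_neg_add]

variable [MeasurableSingletonClass S]

theorem isChainLaw_map_pairPath (hν : IsMarkovMeasure ν A P π) (hπ : ∀ n s, 0 < π n s) :
    IsChainLaw (ν.map pairPath) (pairInit π) (pairTransition P π) where
  isProbabilityMeasure :=
    have := hν.isProb
    Measure.isProbabilityMeasure_map measurable_pairPath.aemeasurable
  initial_mem := hν.pairInit_mem_stdSimplex
  isStochastic := hν.isStochastic_pairTransition hπ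
  measureReal_initialWord n w := by
    rw [map_measureReal_apply measurable_pairPath
      (measurable_initialWord n (measurableSet_singleton w))]
    by_cases hw : w 0 ∈ Set.diagonal S
    · obtain ⟨x, rfl⟩ := exists_initialWord_pairPath_eq hw
      rw [preimage_initialWord_comp_pairPath, hν.pathWeight_initialWord_pairPath]
    · rw [preimage_initialWord_comp_pairPath_eq_empty hw, measureReal_empty, pathWeight, pairInit,
        Set.indicator_of_notMem hw, zero_mul]

theorem absolutelyContinuous_iff_summable_sqHellinger (hν : IsMarkovMeasure ν A P π)
    (hμ : IsMarkovMeasure μ A Q lam) (hA : IsPrimitive A) (hP : Doeblin A P)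
    (hQ : Doeblin A Q) :
    ν ≪ μ ↔ Summable fun n => sqHellinger (pairTransition P π n) (pairTransition Q lam n) := by
  classical
  obtain ⟨c, hc, hcπ⟩ := hν.exists_pos_le_dist hA hP
  obtain ⟨d, hd, hdlam⟩ := hμ.exists_pos_le_dist hA hQ
  obtain ⟨δ, hδ, hδT⟩ := hν.exists_pos_le_pairTransition hA hP
  obtain ⟨η, hη, hηU⟩ := hμ.exists_pos_le_pairTransition hA hQ
  have hνc := hν.isChainLaw_map_pairPath fun n s => hc.trans_le (hcπ n s)
  have hμc := hμ.isChainLaw_map_pairPath fun n s => hd.trans_le (hdlam n s)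
  rw [← absolutelyContinuous_map_iff_of_leftInverse measurable_pairPath measurable_unpairPath
    unpairPath_pairPath]
  constructor
  · obtain ⟨M, hM⟩ := hA.pairAdj.exists_pow_le_transitionProd
    have hmin : 0 < min δ η := lt_min hδ hη
    refine hνc.summable_sqHellinger_of_absolutelyContinuous hμc (pow_pos hmin M) fun n =>
      hM _ _ hmin.le (fun k y z => Real.sqrt_nonneg _) fun k y z hyz => le_geomMean hmin.le
        (min_le_of_left_le (hδT _ y z hyz)) (min_le_of_right_le (hηU _ y z hyz))
  · refine hνc.absolutelyContinuous_of_summable_sqHellinger hμc (fun y hy => ?_)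
      fun n y z hyz => hν.pairTransition_eq_zero n ?_
    · rw [pairInit, Set.indicator_apply_eq_zero] at hy ⊢
      exact fun hdiag => absurd (hy hdiag) (hd.trans_le (hdlam 0 y.1)).ne'
    · exact Bool.eq_false_of_not_eq_true fun hadj => (hη.trans_le (hηU n y z hadj)).ne' hyz

end IsMarkovMeasure

end PairChain

/-- **Kakutani-type criterion for absolute continuity of Markov measures.**
For Markov measures `ν = ν_{(P_n)}` and `μ = μ_{(Q_n)}` on a topologically mixing
SFT, both with the Doeblin condition: `ν ≪ μ` iff
`Σ_{n≥1} Σ_{s,u,v,t} (√(P̂_{-n}(u,s) P_n(v,t)) − √(Q̂_{-n}(u,s) Q_n(v,t)))² < ∞`.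
In particular `ν ≪ μ ↔ μ ≪ ν`, so two such measures are either equivalent or
mutually non-absolutely-continuous. -/
theorem markov_absolutelyContinuous_iff
    {S : Type*} [Fintype S] [MeasurableSpace S] [MeasurableSingletonClass S]
    (A : S → S → Bool) (hA : IsPrimitive A)
    (P : ℤ → S → S → ℝ) (π : ℤ → S → ℝ) (ν : Measure (Seq S))
    (hν : IsMarkovMeasure ν A P π) (hDP : Doeblin A P)
    (Q : ℤ → S → S → ℝ) (lam : ℤ → S → ℝ) (μ : Measure (Seq S))
    (hμ : IsMarkovMeasure μ A Q lam) (hDQ : Doeblin A Q) :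
    (ν ≪ μ ↔
      Summable (fun n : ℕ => ∑ s : S, ∑ u : S, ∑ v : S, ∑ t : S,
        (Real.sqrt (reverseP P π (-((n : ℤ) + 1)) u s * P ((n : ℤ) + 1) v t)
          - Real.sqrt (reverseP Q lam (-((n : ℤ) + 1)) u s * Q ((n : ℤ) + 1) v t)) ^ 2)) ∧
    (ν ≪ μ ↔ μ ≪ ν) := by
  have hiff := hν.absolutelyContinuous_iff_summable_sqHellinger hμ hA hDP hDQ
  have hiff_symm := hμ.absolutelyContinuous_iff_summable_sqHellinger hν hA hDQ hDP
  simp only [sqHellinger_comm (pairTransition Q lam _)] at hiff_symm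
  refine ⟨hiff.trans ?_, hiff.trans hiff_symm.symm⟩
  rw [← summable_nat_add_iff 1]
  simp only [sqHellinger_pairTransition, Nat.cast_add, Nat.cast_one]

end MarkovSFT
end
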